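/- Let n ≥ 3, m₁, m₂ ≥ 0, and λ⁺ = (0, m₂+1, …, m₂+1, m₁+m₂+1). Then for every 2 ≤ j ≤ n and every k ∈ ℤ_{≥0}^n: c^{λ⁺}_{j|1}(k_1+1, …, k_{j−1}+1, k_j, k_{j+1}+1, …, k_n+1) = Σ q^{l₁p₁ + l_{j+1} + ⋯ + l_n} · binom_q(m₂; l₁,…,l_n) · binom_q(m₁; p₁,…,p_n), where the sum is over all l, p ∈ ℤ_{≥0}^n with l₁+⋯+l_n = m₂, p₁+⋯+p_n = m₁, and p_i + Σ_{α≠i} l_α = k_i for every 1 ≤ i ≤ n. -/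

import Mathlib

open Finset

namespace CO

/-- The column diagram `dg'(λ)` of a composition, as a finset of boxes `(i, j)`,
`1 ≤ i ≤ n`, `1 ≤ j ≤ λ_i`. -/
def dgF (n : ℕ) (lam : ℕ → ℕ) : Finset (ℕ × ℕ) :=
  (Finset.Icc 1 n).biUnion fun i => (Finset.Icc 1 (lam i)).image fun j => (i, j)

/-- The augmented diagram `d̂g(λ)`: one extra box `(i, 0)` below each column. -/
def augF (n : ℕ) (lam : ℕ → ℕ) : Finset (ℕ × ℕ) :=
  dgF n lam ∪ (Finset.Icc 1 n).image fun i => (i, 0)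

/-- The box `d(u)` directly below a box. -/
def dbox (u : ℕ × ℕ) : ℕ × ℕ := (u.1, u.2 - 1)

/-- The augmented filling `σ̂`: equal to `σ` on positive rows and to `i` on `(i, 0)`. -/
def aug (σ : ℕ × ℕ → ℕ) (u : ℕ × ℕ) : ℕ := if u.2 = 0 then u.1 else σ u

/-- A filling takes values in `{1, …, n}` on the diagram. -/
def IsFilling (n : ℕ) (lam : ℕ → ℕ) (σ : ℕ × ℕ → ℕ) : Prop :=
  ∀ u ∈ dgF n lam, 1 ≤ σ u ∧ σ u ≤ n

/-- Attacking boxes: same row, or consecutive rows with the lower box to the right. -/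
def Attack (u v : ℕ × ℕ) : Prop :=
  u ≠ v ∧ (u.2 = v.2 ∨ (u.2 = v.2 + 1 ∧ u.1 < v.1) ∨ (v.2 = u.2 + 1 ∧ v.1 < u.1))

/-- A non-attacking filling: `σ̂` takes distinct values on attacking pairs of the
augmented diagram. -/
def NonAttacking (n : ℕ) (lam : ℕ → ℕ) (σ : ℕ × ℕ → ℕ) : Prop :=
  ∀ u ∈ augF n lam, ∀ v ∈ augF n lam, Attack u v → aug σ u ≠ aug σ v

/-- The arm of a box `u`. -/
def armF (n : ℕ) (lam : ℕ → ℕ) (u : ℕ × ℕ) : Finset (ℕ × ℕ) :=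
  ((dgF n lam).filter fun v => v.1 < u.1 ∧ v.2 = u.2 ∧ lam v.1 ≤ lam u.1) ∪
    ((augF n lam).filter fun v => u.1 < v.1 ∧ v.2 + 1 = u.2 ∧ lam v.1 < lam u.1)

/-- `a(u) = |arm(u)|`. -/
def armCard (n : ℕ) (lam : ℕ → ℕ) (u : ℕ × ℕ) : ℕ := (armF n lam u).card

/-- The number of inversions of `σ̂`: attacking pairs `u, u'` with `σ̂(u) < σ̂(u')`
and (same row with `u` to the left, or `u'` one row above `u` strictly to the left). -/
def invCard (n : ℕ) (lam : ℕ → ℕ) (σ : ℕ × ℕ → ℕ) : ℕ :=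
  ((augF n lam ×ˢ augF n lam).filter fun p =>
    aug σ p.1 < aug σ p.2 ∧
      ((p.1.2 = p.2.2 ∧ p.1.1 < p.2.1) ∨ (p.2.2 = p.1.2 + 1 ∧ p.2.1 < p.1.1))).card

/-- The descent set of `σ̂`. -/
def desF (n : ℕ) (lam : ℕ → ℕ) (σ : ℕ × ℕ → ℕ) : Finset (ℕ × ℕ) :=
  (dgF n lam).filter fun u => aug σ (dbox u) < aug σ u

/-- The statistic `coinv(σ̂)` (as an integer). -/
def coinv (n : ℕ) (lam : ℕ → ℕ) (σ : ℕ × ℕ → ℕ) : ℤ :=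
  (∑ u ∈ dgF n lam, (armCard n lam u : ℤ)) - invCard n lam σ +
    (((Finset.Icc 1 n ×ˢ Finset.Icc 1 n).filter fun p =>
      p.1 < p.2 ∧ lam p.1 ≤ lam p.2).card : ℤ) +
    ∑ u ∈ desF n lam σ, (armCard n lam u : ℤ)

/-- The statistic `T(σ)`. -/
def Tstat (n : ℕ) (lam : ℕ → ℕ) (σ : ℕ × ℕ → ℕ) : ℤ :=
  coinv n lam σ -
    ∑ u ∈ (dgF n lam).filter fun u => aug σ u ≠ aug σ (dbox u), (armCard n lam u : ℤ)

/-- Antidominant composition: `λ_1 ≤ ⋯ ≤ λ_n`. -/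
def Antidominant (n : ℕ) (lam : ℕ → ℕ) : Prop :=
  ∀ i j, 1 ≤ i → i ≤ j → j ≤ n → lam i ≤ lam j

/-- Appropriate filling: non-attacking with `T(σ) = 0`. -/
def Appropriate (n : ℕ) (lam : ℕ → ℕ) (σ : ℕ × ℕ → ℕ) : Prop :=
  IsFilling n lam σ ∧ NonAttacking n lam σ ∧ Tstat n lam σ = 0

/-- The operation `π` on compositions: `π(λ) = (λ_n + 1, λ_1, …, λ_{n-1})`. -/
def piComp (n : ℕ) (lam : ℕ → ℕ) : ℕ → ℕ :=
  fun i => if i = 1 then lam n + 1 else lam (i - 1)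

/-- The operation `π` on boxes. -/
def piBox (n : ℕ) (u : ℕ × ℕ) : ℕ × ℕ :=
  if u.1 < n then (u.1 + 1, u.2) else (1, u.2 + 1)

/-- Extension by zero of a function defined on the diagram. -/
def ext (n : ℕ) (lam : ℕ → ℕ) (f : {u // u ∈ dgF n lam} → ℕ) : ℕ × ℕ → ℕ :=
  fun u => if h : u ∈ dgF n lam then f ⟨u, h⟩ else 0

/-- `qstat(σ) = Σ (l(u) + 1)` over boxes `u` with `σ̂(u) < σ̂(d(u))`. -/
def qstat (n : ℕ) (lam : ℕ → ℕ) (σ : ℕ × ℕ → ℕ) : ℕ :=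
  ∑ u ∈ (dgF n lam).filter fun u => aug σ u < aug σ (dbox u), (lam u.1 - u.2 + 1)

end CO

namespace CO

/-- The statistic `asc(τ) = Σ (l(u) + 1)` over boxes `u = (i, j)` with `j ≥ 2` and
`τ(u) < τ(d(u))`. -/
def ascStat (n : ℕ) (mu : ℕ → ℕ) (τ : ℕ × ℕ → ℕ) : ℕ :=
  ∑ u ∈ (dgF n mu).filter fun u => 2 ≤ u.2 ∧ τ u < τ (dbox u), (mu u.1 - u.2 + 1)

/-- The greedy rule (iii): for boxes in rows `≥ 2`, with `S = τ(arm(u)) ∪ {τ(u)}`,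
`τ(u)` is the minimum of `{x ∈ S : x ≥ τ(d(u))}` if nonempty, and `min S` otherwise. -/
def GreedyRule (n : ℕ) (mu : ℕ → ℕ) (τ : ℕ × ℕ → ℕ) : Prop :=
  ∀ u ∈ dgF n mu, 2 ≤ u.2 →
    (({x ∈ τ '' ↑(armF n mu u) ∪ {τ u} | τ (dbox u) ≤ x}.Nonempty →
        τ u = sInf {x ∈ τ '' ↑(armF n mu u) ∪ {τ u} | τ (dbox u) ≤ x}) ∧
      (¬ {x ∈ τ '' ↑(armF n mu u) ∪ {τ u} | τ (dbox u) ≤ x}.Nonempty →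
        τ u = sInf (τ '' ↑(armF n mu u) ∪ {τ u})))

/-- Conditions (i)–(iv) on the fillings `τ` counted by `c_a^μ(k)`. -/
def CCond (n : ℕ) (mu : ℕ → ℕ) (a : ℕ → ℕ) (k : ℕ → ℕ) (τ : ℕ × ℕ → ℕ) : Prop :=
  (∀ u ∈ dgF n mu, 1 ≤ τ u ∧ τ u ≤ n) ∧
    (∀ j, (j, 1) ∈ dgF n mu → τ (j, 1) = a j) ∧
    (∀ u ∈ dgF n mu, ∀ v ∈ dgF n mu, Attack u v → τ u ≠ τ v) ∧
    GreedyRule n mu τ ∧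
    ∀ i, 1 ≤ i → i ≤ n → ((dgF n mu).filter fun u => τ u = i).card = k i

open Classical in
/-- The coefficient `c_a^μ(k) ∈ ℤ[q]`: the generating function `Σ_τ q^{asc(τ)}`
over fillings satisfying (i)–(iv). -/
noncomputable def cCoef (n : ℕ) (mu : ℕ → ℕ) (a : ℕ → ℕ) (k : ℕ → ℕ) : Polynomial ℤ :=
  ∑ f ∈ (Fintype.piFinset fun _ : {u // u ∈ dgF n mu} => Finset.Icc 1 n).filter
      fun f => CCond n mu a k (ext n mu f),
    Polynomial.X ^ ascStat n mu (ext n mu f)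

end CO

namespace CO

/-- Transport a `Fin n`-tuple to a function on `{1, …, n}` (1-based indexing). -/
def liftFin (n : ℕ) (k : Fin n → ℕ) : ℕ → ℕ :=
  fun i => if h : i - 1 < n then k ⟨i - 1, h⟩ else 0

/-- The statistic `stat(w)` on words with letters in `{1, …, n}`: the number of pairs
of positions `i < j` with either `w_i < w_j < n`, or `w_i = n` and `w_j < n`. -/
def wstat (n m : ℕ) (w : Fin m → ℕ) : ℕ :=
  ((Finset.univ ×ˢ Finset.univ : Finset (Fin m × Fin m)).filter fun p =>
    p.1 < p.2 ∧ ((w p.1 < w p.2 ∧ w p.2 < n) ∨ (w p.1 = n ∧ w p.2 < n))).card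

open Classical in
/-- The `q`-multinomial coefficient `binom_q(m; l)`, as the generating function of
`stat` over words of length `m` with letters in `{1, …, n}` and content `l`. -/
noncomputable def qMultinomial (n m : ℕ) (l : ℕ → ℕ) : Polynomial ℤ :=
  ∑ w ∈ (Fintype.piFinset fun _ : Fin m => Finset.Icc 1 n).filter
      fun w => ∀ t ∈ Finset.Icc 1 n, (Finset.univ.filter fun i => w i = t).card = l t,
    Polynomial.X ^ wstat n m w

end CO

namespace CO

/-- The bottom-row tuple defining `c^μ_{ã|b}` (for `s = n - 1`): entry `b` at
position `n`, and the elements of `{1, …, n} ∖ {ã, b}` in decreasing order at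
positions `2, …, n - 1`. -/
def aTuple (n atil b : ℕ) : ℕ → ℕ :=
  fun j => if j = n then b
    else ((((Finset.Icc 1 n).erase atil).erase b).sort (· ≤ ·)).getD (n - 1 - j) 0

/-- The coefficient `c^μ_{ã|b}(k)`. -/
noncomputable def cBar (n : ℕ) (mu : ℕ → ℕ) (atil b : ℕ) (k : ℕ → ℕ) : Polynomial ℤ :=
  cCoef n mu (aTuple n atil b) k

end CO

/-!
A row on the columns `2, …, n` with pairwise distinct entries misses exactly one letter. By the
greedy rule, the rows that fit on top of a row missing `a` with last entry `b` are determined by the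
letter `c` they miss, which is arbitrary; such a row has a single descent if `a < c` and none
otherwise, and its last entry is `b`, unless `c = b`, when it is the cyclic successor of `b`.
Peeling off rows from the bottom thus gives a recursion in `m₂`, which ends in a single column of
height `m₁`.

With `D = p - l`, which the condition on `(l, p)` prescribes, the closed formula extends to an
arbitrary last entry `b`: the exponent becomes `l_b p_b + ∑_{t > a} l_t + ∑_{t < b} p_t`. It
satisfies the same recursion. Removing the first letter `c` of the word of content `l` corresponds
to splitting `[m + 1]` into the `q`-integers `[l_c]`, and such a splitting may be read cyclically
from any letter, in particular from `a`. The passage from `b` to its cyclic successor amounts to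
`∑ q ^ (l_i p_i) binom_q(m; l) binom_q(M; p)`, over the pairs with `p - l = D`, not depending on
`i`, which reduces to the equality of the two forms of the `q`-Vandermonde identity.
-/

namespace CO

open Polynomial

section QAnalogues

variable {R : Type*} [CommSemiring R] (q : R)

/-- The `q`-integer `[n] = 1 + q + ⋯ + q ^ (n - 1)`. -/
def qInt (n : ℕ) : R := ∑ i ∈ range n, q ^ i

@[simp] lemma qInt_zero : qInt q 0 = 0 := sum_range_zero _

lemma qInt_add (m n : ℕ) : qInt q (m + n) = qInt q m + q ^ m * qInt q n := by
  simp only [qInt, sum_range_add, pow_add, mul_sum]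

lemma qInt_sum {ι : Type*} [LinearOrder ι] (s : Finset ι) (l : ι → ℕ) :
    qInt q (∑ t ∈ s, l t) = ∑ c ∈ s, q ^ (∑ t ∈ s with c < t, l t) * qInt q (l c) := by
  induction s using Finset.induction_on_min with
  | empty => simp
  | insert a s ha ih =>
    have has : a ∉ s := fun h => (ha a h).false
    have hfa : {t ∈ insert a s | a < t} = s := by
      rw [filter_insert, if_neg (lt_irrefl a), filter_true_of_mem ha]
    have hfc (c) (hc : c ∈ s) : {t ∈ insert a s | c < t} = {t ∈ s | c < t} := by
      rw [filter_insert, if_neg (ha c hc).not_gt]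
    rw [sum_insert has, sum_insert has, add_comm (l a), qInt_add, ih, hfa, add_comm]
    congr 1
    exact sum_congr rfl fun c hc => by rw [hfc c hc]

/-- `qInt_sum` with the summands read cyclically, starting from the last index that is at most
`a`. -/
lemma sum_pow_gt_mul_qInt {ι : Type*} [LinearOrder ι] (s : Finset ι) (l : ι → ℕ) (a : ι) :
    ∑ c ∈ s, q ^ ((if a < c then ∑ t ∈ s, l t else 0) + ∑ t ∈ s with c < t, l t) * qInt q (l c) =
      q ^ (∑ t ∈ s with a < t, l t) * qInt q (∑ t ∈ s, l t) := by
  have hgt : ∑ c ∈ s with a < c,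
      q ^ ((if a < c then ∑ t ∈ s, l t else 0) + ∑ t ∈ s with c < t, l t) * qInt q (l c) =
      q ^ (∑ t ∈ s, l t) * qInt q (∑ t ∈ s with a < t, l t) := by
    rw [qInt_sum, mul_sum]
    refine sum_congr rfl fun c hc => ?_
    have hac := (mem_filter.1 hc).2
    have hf : {t ∈ {t ∈ s | a < t} | c < t} = {t ∈ s | c < t} := by
      rw [filter_filter]
      exact filter_congr fun t _ => ⟨And.right, fun h => ⟨hac.trans h, h⟩⟩
    rw [if_pos hac, hf, pow_add, mul_assoc]
  have hle : ∑ c ∈ s with ¬ a < c,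
      q ^ ((if a < c then ∑ t ∈ s, l t else 0) + ∑ t ∈ s with c < t, l t) * qInt q (l c) =
      q ^ (∑ t ∈ s with a < t, l t) * qInt q (∑ t ∈ s with ¬ a < t, l t) := by
    rw [qInt_sum, mul_sum]
    refine sum_congr rfl fun c hc => ?_
    have hac := (mem_filter.1 hc).2
    have hf : ∑ t ∈ s with c < t, l t =
        ∑ t ∈ s with a < t, l t + ∑ t ∈ {t ∈ s | ¬ a < t} with c < t, l t := by
      rw [← sum_filter_add_sum_filter_not {t ∈ s | c < t} (a < ·), filter_filter, filter_filter,
        filter_filter]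
      congr 2 <;> refine filter_congr fun t _ => ?_
      · exact ⟨And.right, fun h => ⟨(not_lt.1 hac).trans_lt h, h⟩⟩
      · exact and_comm
    rw [if_neg hac, zero_add, hf, pow_add, mul_assoc]
  have hsum := sum_filter_add_sum_filter_not s (a < ·) l
  rw [← sum_filter_add_sum_filter_not s (a < ·), hgt, hle]
  generalize ∑ t ∈ s with a < t, l t = A at *
  generalize ∑ t ∈ s with ¬ a < t, l t = B at *
  rw [← hsum, add_comm A, qInt_add]
  ring

lemma sum_pow_lt_mul_qInt {ι : Type*} [LinearOrder ι] (s : Finset ι) (l : ι → ℕ) (b : ι) :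
    ∑ c ∈ s, q ^ ((if c < b then ∑ t ∈ s, l t else 0) + ∑ t ∈ s with t < c, l t) * qInt q (l c) =
      q ^ (∑ t ∈ s with t < b, l t) * qInt q (∑ t ∈ s, l t) :=
  sum_pow_gt_mul_qInt (ι := ιᵒᵈ) q s l b

/-- The `q`-factorial `[n]! = [1][2]⋯[n]`. -/
def qFactorial (n : ℕ) : R := ∏ i ∈ range n, qInt q (i + 1)

@[simp] lemma qFactorial_zero : qFactorial q 0 = 1 := prod_range_zero _

lemma qFactorial_succ (n : ℕ) : qFactorial q (n + 1) = qFactorial q n * qInt q (n + 1) :=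
  prod_range_succ _ _

lemma prod_qFactorial_of_pos {ι : Type*} [DecidableEq ι] {s : Finset ι} {l : ι → ℕ} {c : ι}
    (hc : c ∈ s) (hl : 0 < l c) :
    ∏ t ∈ s, qFactorial q (l t) =
      qInt q (l c) * ∏ t ∈ s, qFactorial q ((l - Pi.single c 1 : ι → ℕ) t) := by
  rw [← mul_prod_erase s _ hc]
  conv_rhs => rw [← mul_prod_erase s _ hc, ← mul_assoc]
  congr 1
  · obtain ⟨a, ha⟩ := Nat.exists_eq_succ_of_ne_zero hl.ne'
    simp [ha, qFactorial_succ, mul_comm]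
  · refine prod_congr rfl fun t ht => ?_
    simp [(mem_erase.1 ht).1]

/-- The Gaussian binomial coefficient, defined by the `q`-Pascal rule. -/
def gaussBinom : ℕ → ℕ → R
  | _, 0 => 1
  | 0, _ + 1 => 0
  | n + 1, k + 1 => gaussBinom n k + q ^ (k + 1) * gaussBinom n (k + 1)

@[simp] lemma gaussBinom_zero_right (n : ℕ) : gaussBinom q n 0 = 1 := by
  cases n <;> rfl

lemma gaussBinom_succ_succ (n k : ℕ) :
    gaussBinom q (n + 1) (k + 1) = gaussBinom q n k + q ^ (k + 1) * gaussBinom q n (k + 1) :=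
  rfl

lemma gaussBinom_eq_zero_of_lt {n k : ℕ} (h : n < k) : gaussBinom q n k = 0 := by
  induction n generalizing k with
  | zero => cases k with
    | zero => simp at h
    | succ k => rfl
  | succ n ih => cases k with
    | zero => simp at h
    | succ k => rw [gaussBinom_succ_succ, ih (by omega), ih (by omega), mul_zero, add_zero]

lemma gaussBinom_mul_qFactorial_mul_qFactorial (i j : ℕ) :
    gaussBinom q (i + j) i * qFactorial q i * qFactorial q j = qFactorial q (i + j) := by
  induction i generalizing j with
  | zero => simp
  | succ i ihi =>
    induction j with
    | zero =>
      have h := ihi 0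
      simp only [add_zero, qFactorial_zero, mul_one] at h ⊢
      rw [gaussBinom_succ_succ, gaussBinom_eq_zero_of_lt q (Nat.lt_succ_self i), mul_zero, add_zero,
        qFactorial_succ, ← mul_assoc, h]
    | succ j ihj =>
      have hi := ihi (j + 1)
      rw [show i + 1 + j = i + (j + 1) by omega] at ihj
      rw [show i + 1 + (j + 1) = i + (j + 1) + 1 by omega, gaussBinom_succ_succ,
        qFactorial_succ q (i + (j + 1)), show i + (j + 1) + 1 = (i + 1) + (j + 1) by omega,
        qInt_add,
        mul_add]
      nth_rewrite 1 [← hi]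
      rw [← ihj, qFactorial_succ q i, qFactorial_succ q j]
      ring

lemma gaussBinom_add_eq_sum_antidiagonal (L P k : ℕ) :
    gaussBinom q (L + P) k = ∑ ij ∈ antidiagonal k,
      q ^ ((L - ij.1) * ij.2) * gaussBinom q L ij.1 * gaussBinom q P ij.2 := by
  induction L generalizing k with
  | zero =>
    rw [sum_eq_single (0, k)]
    · simp
    · rintro ⟨_ | i, j⟩ hij hne
      · simp_all
      · simp [gaussBinom_eq_zero_of_lt]
    · simp
  | succ L ih =>
    cases k with
    | zero => simp
    | succ k =>
      have hstep (i j : ℕ) (hij : i + j = k) :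
          q ^ ((L + 1 - (i + 1)) * j) * gaussBinom q (L + 1) (i + 1) =
            q ^ ((L - i) * j) * gaussBinom q L i +
              q ^ (k + 1) * (q ^ ((L - (i + 1)) * j) * gaussBinom q L (i + 1)) := by
        rw [gaussBinom_succ_succ, Nat.add_sub_add_right, mul_add]
        obtain hL | hL := Nat.lt_or_ge L (i + 1)
        · simp [gaussBinom_eq_zero_of_lt q hL]
        · obtain ⟨d, rfl⟩ := Nat.exists_eq_add_of_le hL
          rw [← hij, show i + 1 + d - i = d + 1 by omega, Nat.add_sub_cancel_left]
          ring
      rw [Nat.add_right_comm, gaussBinom_succ_succ, ih, ih, Nat.sum_antidiagonal_succ,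
        Nat.sum_antidiagonal_succ, mul_add, add_left_comm]
      congr 1
      · simp only [gaussBinom_zero_right, Nat.sub_zero]
        ring
      · rw [mul_sum, ← sum_add_distrib]
        refine sum_congr rfl fun ij hij => ?_
        rw [hstep _ _ (mem_antidiagonal.1 hij)]
        ring

lemma sum_antidiagonal_gaussBinom_comm (L P k : ℕ) :
    ∑ ij ∈ antidiagonal k,
        q ^ ((L - ij.1) * ij.2) * (gaussBinom q L ij.1 * gaussBinom q P ij.2) =
      ∑ ij ∈ antidiagonal k,
        q ^ (ij.1 * (P - ij.2)) * (gaussBinom q L ij.1 * gaussBinom q P ij.2) := by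
  have h := (gaussBinom_add_eq_sum_antidiagonal q L P k).symm.trans <|
    (congrArg (gaussBinom q · k) (add_comm L P)).trans <|
      (gaussBinom_add_eq_sum_antidiagonal q P L k).trans Nat.sum_antidiagonal_swap.symm
  simpa only [Prod.fst_swap, Prod.snd_swap, mul_comm, mul_left_comm, mul_assoc] using h

end QAnalogues

section QMultinomials

open Classical in
/-- The words of length `m` in the letters `1, …, n` with content `l`. -/
noncomputable def words (n m : ℕ) (l : ℕ → ℕ) : Finset (Fin m → ℕ) :=
  {w ∈ Fintype.piFinset fun _ : Fin m => Icc 1 n | ∀ t ∈ Icc 1 n, #{i | w i = t} = l t}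

variable {n m : ℕ} {l : ℕ → ℕ}

lemma mem_words {w : Fin m → ℕ} :
    w ∈ words n m l ↔ (∀ i, w i ∈ Icc 1 n) ∧ ∀ t ∈ Icc 1 n, #{i | w i = t} = l t := by
  simp only [words, mem_filter, Fintype.mem_piFinset]

lemma qMultinomial_eq_sum_words : qMultinomial n m l = ∑ w ∈ words n m l, X ^ wstat n m w := by
  refine sum_congr ?_ fun _ _ => rfl
  ext w
  simp only [mem_words, mem_filter, Fintype.mem_piFinset]

lemma qMultinomial_congr {l' : ℕ → ℕ} (h : ∀ t ∈ Icc 1 n, l t = l' t) :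
    qMultinomial n m l = qMultinomial n m l' := by
  have : words n m l = words n m l' := by
    ext w
    simp only [mem_words]
    exact and_congr_right' <| forall₂_congr fun t ht => by rw [h t ht]
  rw [qMultinomial_eq_sum_words, this, ← qMultinomial_eq_sum_words]

lemma card_filter_letter {w : Fin m → ℕ} (hw : w ∈ words n m l) (P : ℕ → Prop) [DecidablePred P] :
    #{i | P (w i)} = ∑ t ∈ Icc 1 n with P t, l t := by
  rw [mem_words] at hw
  rw [card_eq_sum_card_fiberwise (f := w) (t := {t ∈ Icc 1 n | P t})
    fun i hi => by simpa using ⟨mem_Icc.1 (hw.1 i), by simpa using hi⟩]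
  refine sum_congr rfl fun t ht => ?_
  rw [← hw.2 t (mem_of_mem_filter t ht), filter_filter]
  exact congrArg card <| filter_congr fun i _ => ⟨And.right, fun h => ⟨h ▸ (mem_filter.1 ht).2, h⟩⟩

lemma cons_mem_words {c : ℕ} {w : Fin m → ℕ} :
    (Fin.cons c w : Fin (m + 1) → ℕ) ∈ words n (m + 1) l ↔
      c ∈ {c ∈ Icc 1 n | 0 < l c} ∧ w ∈ words n m (l - Pi.single c 1) := by
  have hcard (t : ℕ) : #{i | (Fin.cons c w : Fin (m + 1) → ℕ) i = t} =
      #{i | w i = t} + if c = t then 1 else 0 := by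
    simp only [card_filter, Fin.sum_univ_succ, Fin.cons_zero, Fin.cons_succ, add_comm]
  simp only [mem_words, Fin.forall_fin_succ, Fin.cons_zero, Fin.cons_succ, hcard, mem_filter,
    Pi.sub_apply, Pi.single_apply]
  constructor
  · rintro ⟨⟨hc, hw⟩, hl⟩
    have hlc := hl c hc
    rw [if_pos rfl] at hlc
    refine ⟨⟨hc, by omega⟩, hw, fun t ht => ?_⟩
    rw [← hl t ht]
    split_ifs <;> omega
  · rintro ⟨⟨hc, hlc⟩, hw, hl⟩
    refine ⟨⟨hc, hw⟩, fun t ht => ?_⟩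
    rw [hl t ht]
    obtain rfl | hct := eq_or_ne c t
    · simp only [if_true]
      omega
    · rw [if_neg hct, if_neg hct.symm, add_zero, Nat.sub_zero]

lemma wstat_cons (c : ℕ) (w : Fin m → ℕ) :
    wstat n (m + 1) (Fin.cons c w : Fin (m + 1) → ℕ) =
      wstat n m w + #{i | (c < w i ∧ w i < n) ∨ (c = n ∧ w i < n)} := by
  simp only [wstat, card_filter, sum_product, Fin.sum_univ_succ, Fin.cons_zero, Fin.cons_succ,
    Fin.succ_pos, Fin.not_lt_zero, Fin.succ_lt_succ_iff, false_and, true_and, if_false,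
    zero_add]
  rw [add_comm]

lemma qMultinomial_succ : qMultinomial n (m + 1) l =
    ∑ c ∈ Icc 1 n with 0 < l c,
      X ^ (∑ t ∈ Icc 1 n with (c < t ∧ t < n) ∨ (c = n ∧ t < n), l t) *
        qMultinomial n m (l - Pi.single c 1) := by
  simp only [qMultinomial_eq_sum_words, mul_sum]
  rw [sum_sigma']
  refine sum_nbij' (fun w => ⟨w 0, Fin.tail w⟩) (fun p => Fin.cons p.1 p.2) (fun w hw => ?_)
    (fun p hp => ?_) (fun w _ => Fin.cons_self_tail w) (fun p _ => by simp) (fun w hw => ?_)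
  · rw [mem_sigma, ← cons_mem_words, Fin.cons_self_tail]
    exact hw
  · exact cons_mem_words.2 (mem_sigma.1 hp)
  · have hcw := (cons_mem_words (c := w 0) (w := Fin.tail w)).1 (by rwa [Fin.cons_self_tail])
    rw [← Fin.cons_self_tail w, wstat_cons, Fin.cons_zero, Fin.tail_cons,
      card_filter_letter hcw.2 fun t => (w 0 < t ∧ t < n) ∨ (w 0 = n ∧ t < n), pow_add, mul_comm]
    congr 2
    refine sum_congr rfl fun t ht => ?_
    have : t ≠ w 0 := by
      obtain h | h := (mem_filter.1 ht).2 <;> grind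
    simp [this]

/-- The number of letters above `a` in a word with letters `1, …, n` and content `l`. -/
def sumAbove (n : ℕ) (l : ℕ → ℕ) (a : ℕ) : ℕ := ∑ t ∈ Icc 1 n with a < t, l t

/-- The number of letters below `b` in a word with letters `1, …, n` and content `l`. -/
def sumBelow (n : ℕ) (l : ℕ → ℕ) (b : ℕ) : ℕ := ∑ t ∈ Icc 1 n with t < b, l t

lemma sumAbove_add_single_self (c : ℕ) : sumAbove n (l + Pi.single c 1) c = sumAbove n l c :=
  sum_congr rfl fun t ht => by simp [(mem_filter.1 ht).2.ne']

lemma sumBelow_add_single_self (c : ℕ) : sumBelow n (l + Pi.single c 1) c = sumBelow n l c :=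
  sum_congr rfl fun t ht => by simp [(mem_filter.1 ht).2.ne]

lemma add_single_sub_single {c : ℕ} (hl : 0 < l c) :
    l - Pi.single c 1 + Pi.single c 1 = l := by
  ext t
  obtain rfl | h := eq_or_ne t c
  · simpa using Nat.sub_add_cancel hl
  · simp [h]

lemma sum_sub_single {s : Finset ℕ} {c : ℕ} (hc : c ∈ s) (hl : 0 < l c)
    (h : ∑ t ∈ s, l t = m + 1) : ∑ t ∈ s, (l - Pi.single c 1 : ℕ → ℕ) t = m := by
  rw [← add_single_sub_single hl] at h
  simpa [sum_add_distrib, hc] using h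

lemma sum_filter_pos_mul_qInt {s : Finset ℕ} {f : ℕ → ℤ[X]} :
    ∑ c ∈ s with 0 < l c, f c * qInt X (l c) = ∑ c ∈ s, f c * qInt X (l c) :=
  sum_filter_of_ne fun c _ h => Nat.pos_of_ne_zero fun h0 => h (by simp [h0])

lemma add_sum_wstat_weight {c : ℕ} (hc : c ∈ Icc 1 n) :
    l n + ∑ t ∈ Icc 1 n with (c < t ∧ t < n) ∨ (c = n ∧ t < n), l t =
      (if n - 1 < c then ∑ t ∈ Icc 1 n, l t else 0) + sumAbove n l c := by
  obtain ⟨h1, hcn⟩ := mem_Icc.1 hc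
  have hn : n ∈ Icc 1 n := by simp; omega
  obtain rfl | hlt := hcn.eq_or_lt
  · have hempty : sumAbove c l c = 0 := by
      rw [sumAbove, filter_false_of_mem fun t ht => (mem_Icc.1 ht).2.not_gt, sum_empty]
    rw [if_pos (by omega), hempty, add_zero, ← add_sum_erase _ _ hn]
    refine congrArg (l c + ·) (sum_congr ?_ fun _ _ => rfl)
    ext t
    grind
  · rw [if_neg (by omega), zero_add, sumAbove,
      ← add_sum_erase _ _ (mem_filter.2 ⟨hn, hlt⟩)]
    refine congrArg (l n + ·) (sum_congr ?_ fun _ _ => rfl)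
    ext t
    grind

theorem qMultinomial_mul_prod_qFactorial (hl : ∑ t ∈ Icc 1 n, l t = m) :
    qMultinomial n m l * ∏ t ∈ Icc 1 n, qFactorial X (l t) = qFactorial X m := by
  induction m generalizing l with
  | zero =>
    have hl0 := sum_eq_zero_iff.1 hl
    have hwords : words n 0 l = univ := by
      ext w
      simpa only [mem_words, mem_univ, iff_true] using
        ⟨fun i => i.elim0, fun t ht => by simp [hl0 t ht]⟩
    rw [prod_eq_one fun t ht => by rw [hl0 t ht, qFactorial_zero], qMultinomial_eq_sum_words,
      hwords]
    simp [wstat]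
  | succ m ih =>
    have hcyc := sum_pow_gt_mul_qInt (X : ℤ[X]) (Icc 1 n) l (n - 1)
    have hn : 1 ≤ n := by
      by_contra h
      simp [Nat.lt_one_iff.1 (not_le.1 h)] at hl
    have htop : ∑ t ∈ Icc 1 n with n - 1 < t, l t = l n := by
      rw [show {t ∈ Icc 1 n | n - 1 < t} = {n} by ext t; simp; omega, sum_singleton]
    rw [htop, hl] at hcyc
    refine mul_left_cancel₀ (pow_ne_zero (l n) X_ne_zero) ?_
    rw [qMultinomial_succ, sum_mul, mul_sum, qFactorial_succ, mul_left_comm, ← hcyc,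
      ← sum_filter_pos_mul_qInt, mul_sum]
    refine sum_congr rfl fun c hc => ?_
    obtain ⟨hc, hlc⟩ := mem_filter.1 hc
    have hw := add_sum_wstat_weight (l := l) hc
    rw [hl, sumAbove] at hw
    rw [← hw, prod_qFactorial_of_pos X hc hlc, ← ih (sum_sub_single hc hlc hl)]
    ring

lemma qInt_X_ne_zero {k : ℕ} (hk : k ≠ 0) : qInt (X : ℤ[X]) k ≠ 0 := fun h => by
  have h1 := congrArg (eval 1) h
  simp only [qInt, eval_finsetSum, eval_pow, eval_X, one_pow, sum_const, card_range,
    nsmul_eq_mul, mul_one, eval_zero, Nat.cast_eq_zero] at h1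
  exact hk h1

lemma qFactorial_X_ne_zero (k : ℕ) : qFactorial (X : ℤ[X]) k ≠ 0 :=
  prod_ne_zero_iff.2 fun i _ => qInt_X_ne_zero i.succ_ne_zero

/-- The recursions for `qMultinomial` all come from splitting `[m + 1]` into the `q`-integers
`[l c]`. -/
lemma pow_mul_qMultinomial_succ (hl : ∑ t ∈ Icc 1 n, l t = m + 1) {e : ℕ → ℕ} {E : ℕ}
    (he : ∑ c ∈ Icc 1 n, X ^ e c * qInt X (l c) = (X : ℤ[X]) ^ E * qInt X (m + 1)) :
    X ^ E * qMultinomial n (m + 1) l =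
      ∑ c ∈ Icc 1 n with 0 < l c, X ^ e c * qMultinomial n m (l - Pi.single c 1) := by
  refine mul_right_cancel₀
    (prod_ne_zero_iff.2 fun t (_ : t ∈ Icc 1 n) => qFactorial_X_ne_zero (l t)) ?_
  rw [mul_assoc, qMultinomial_mul_prod_qFactorial hl, qFactorial_succ, mul_left_comm, ← he,
    ← sum_filter_pos_mul_qInt, mul_sum, sum_mul]
  refine sum_congr rfl fun c hc => ?_
  obtain ⟨hc, hlc⟩ := mem_filter.1 hc
  rw [prod_qFactorial_of_pos X hc hlc,
    ← qMultinomial_mul_prod_qFactorial (sum_sub_single hc hlc hl)]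
  ring

lemma sum_piAntidiag_succ {M : Type*} [AddCommMonoid M] (s : Finset ℕ) (m : ℕ)
    (G : ℕ → (ℕ → ℕ) → M) :
    ∑ l ∈ piAntidiag s (m + 1), ∑ c ∈ s with 0 < l c, G c l =
      ∑ c ∈ s, ∑ l ∈ piAntidiag s m, G c (l + Pi.single c 1) := by
  rw [sum_sigma', sum_sigma']
  refine sum_nbij' (fun p => ⟨p.2, p.1 - Pi.single p.2 1⟩) (fun p => ⟨p.2 + Pi.single p.1 1, p.1⟩)
    ?_ ?_ ?_ ?_ ?_
  · rintro ⟨l, c⟩ h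
    simp only [mem_sigma, mem_filter, mem_piAntidiag] at h ⊢
    refine ⟨h.2.1, sum_sub_single h.2.1 h.2.2 h.1.1, fun t ht => h.1.2 t fun h0 => ht ?_⟩
    rw [Pi.sub_apply, h0, Nat.zero_sub]
  · rintro ⟨c, l⟩ h
    simp only [mem_sigma, mem_filter, mem_piAntidiag] at h ⊢
    refine ⟨⟨by simp [sum_add_distrib, h], fun t ht => ?_⟩, h.1, by simp⟩
    by_contra hts
    have htc : t ≠ c := fun htc => hts (htc ▸ h.1)
    exact hts <| h.2.2 t <| by simpa [htc] using ht
  · rintro ⟨l, c⟩ h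
    exact Sigma.ext (add_single_sub_single (mem_filter.1 (mem_sigma.1 h).2).2) HEq.rfl
  · rintro ⟨c, l⟩ _
    exact Sigma.ext rfl (heq_of_eq (add_tsub_cancel_right l _))
  · rintro ⟨l, c⟩ h
    exact congrArg (G c) (add_single_sub_single (mem_filter.1 (mem_sigma.1 h).2).2).symm

lemma sum_piAntidiag_above (m a : ℕ) (F : (ℕ → ℕ) → ℤ[X]) :
    ∑ l ∈ piAntidiag (Icc 1 n) (m + 1), X ^ sumAbove n l a * qMultinomial n (m + 1) l * F l =
      ∑ c ∈ Icc 1 n, ∑ l ∈ piAntidiag (Icc 1 n) m,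
        X ^ ((if a < c then m + 1 else 0) + sumAbove n l c) * qMultinomial n m l *
          F (l + Pi.single c 1) := by
  have hrec (l : ℕ → ℕ) (hl : l ∈ piAntidiag (Icc 1 n) (m + 1)) :=
    pow_mul_qMultinomial_succ (mem_piAntidiag.1 hl).1 <| by
      simpa only [(mem_piAntidiag.1 hl).1] using sum_pow_gt_mul_qInt X (Icc 1 n) l a
  rw [sum_congr rfl fun l hl => by rw [sumAbove, hrec l hl, sum_mul], sum_piAntidiag_succ]
  refine sum_congr rfl fun c _ => sum_congr rfl fun l _ => ?_
  rw [add_tsub_cancel_right, ← sumAbove_add_single_self, sumAbove]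

lemma sum_piAntidiag_below (m b : ℕ) (F : (ℕ → ℕ) → ℤ[X]) :
    ∑ l ∈ piAntidiag (Icc 1 n) (m + 1), X ^ sumBelow n l b * qMultinomial n (m + 1) l * F l =
      ∑ c ∈ Icc 1 n, ∑ l ∈ piAntidiag (Icc 1 n) m,
        X ^ ((if c < b then m + 1 else 0) + sumBelow n l c) * qMultinomial n m l *
          F (l + Pi.single c 1) := by
  have hrec (l : ℕ → ℕ) (hl : l ∈ piAntidiag (Icc 1 n) (m + 1)) :=
    pow_mul_qMultinomial_succ (mem_piAntidiag.1 hl).1 <| by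
      simpa only [(mem_piAntidiag.1 hl).1] using sum_pow_lt_mul_qInt X (Icc 1 n) l b
  rw [sum_congr rfl fun l hl => by rw [sumBelow, hrec l hl, sum_mul], sum_piAntidiag_succ]
  refine sum_congr rfl fun c _ => sum_congr rfl fun l _ => ?_
  rw [add_tsub_cancel_right, ← sumBelow_add_single_self, sumBelow]

end QMultinomials

section MergeLetters

/-- The content `l` with all letters `i'` replaced by `i`. -/
def mergeLetters (i i' : ℕ) (l : ℕ → ℕ) : ℕ → ℕ :=
  Function.update (Function.update l i' 0) i (l i + l i')

variable {n m M i i' : ℕ} {l p : ℕ → ℕ}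

lemma mergeLetters_eq_iff {l' : ℕ → ℕ} :
    mergeLetters i i' l = mergeLetters i i' l' ↔
      l i + l i' = l' i + l' i' ∧ ∀ t, t ≠ i → t ≠ i' → l t = l' t := by
  simp only [mergeLetters, funext_iff, Function.update_apply]
  grind

lemma sum_mergeLetters {s : Finset ℕ} (hne : i ≠ i') (hi : i ∈ s) (hi' : i' ∈ s) :
    ∑ t ∈ s, mergeLetters i i' l t = ∑ t ∈ s, l t := by
  have h (t : ℕ) : mergeLetters i i' l t + Pi.single (M := fun _ => ℕ) i' (l i') t =
      l t + Pi.single (M := fun _ => ℕ) i (l i') t := by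
    simp only [mergeLetters, Function.update_apply, Pi.single_apply]
    grind
  simpa [sum_add_distrib, hi, hi'] using sum_congr (s₁ := s) rfl fun t _ => h t

lemma mem_piAntidiag_of_mergeLetters_eq {s : Finset ℕ} (hne : i ≠ i') (hi : i ∈ s) (hi' : i' ∈ s)
    {l' : ℕ → ℕ} (h : mergeLetters i i' l = mergeLetters i i' l') (hl' : l' ∈ piAntidiag s m) :
    l ∈ piAntidiag s m := by
  rw [mem_piAntidiag] at hl' ⊢
  refine ⟨by rw [← sum_mergeLetters hne hi hi', h, sum_mergeLetters hne hi hi', hl'.1],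
    fun t ht => ?_⟩
  by_contra hts
  have hl't := ((mergeLetters_eq_iff).1 h).2 t (fun e => hts (e ▸ hi)) fun e => hts (e ▸ hi')
  exact hts <| hl'.2 t <| hl't ▸ ht

lemma qMultinomial_eq_gaussBinom_mul (hne : i ≠ i') (hi : i ∈ Icc 1 n) (hi' : i' ∈ Icc 1 n)
    (hl : ∑ t ∈ Icc 1 n, l t = m) :
    qMultinomial n m l =
      gaussBinom X (l i + l i') (l i) * qMultinomial n m (mergeLetters i i' l) := by
  have hi'' : i' ∈ (Icc 1 n).erase i := mem_erase.2 ⟨hne.symm, hi'⟩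
  refine mul_right_cancel₀
    (prod_ne_zero_iff.2 fun t (_ : t ∈ Icc 1 n) => qFactorial_X_ne_zero (l t)) ?_
  rw [qMultinomial_mul_prod_qFactorial hl, ← qMultinomial_mul_prod_qFactorial
    ((sum_mergeLetters hne hi hi').trans hl), ← mul_prod_erase _ _ hi, ← mul_prod_erase _ _ hi'',
    ← mul_prod_erase _ (fun t => qFactorial X (l t)) hi,
    ← mul_prod_erase _ (fun t => qFactorial X (l t)) hi'']
  have hrest : ∏ t ∈ ((Icc 1 n).erase i).erase i', qFactorial (X : ℤ[X]) (mergeLetters i i' l t) =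
      ∏ t ∈ ((Icc 1 n).erase i).erase i', qFactorial X (l t) := prod_congr rfl fun t ht => by
    simp only [mem_erase] at ht
    rw [mergeLetters, Function.update_of_ne ht.2.1, Function.update_of_ne ht.1]
  rw [hrest, mergeLetters, Function.update_self, Function.update_of_ne hne.symm,
    Function.update_self, qFactorial_zero,
    ← gaussBinom_mul_qFactorial_mul_qFactorial X (l i) (l i')]
  ring

end MergeLetters

section ContentPairs

/-- The pairs `(l, p)` of contents of words of lengths `m` and `M` in the letters `1, …, n` with
prescribed difference `p - l = D`. -/
noncomputable def contentPairs (n m M : ℕ) (D : ℕ → ℤ) : Finset ((ℕ → ℕ) × (ℕ → ℕ)) :=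
  {lp ∈ piAntidiag (Icc 1 n) m ×ˢ piAntidiag (Icc 1 n) M |
    ∀ t ∈ Icc 1 n, (lp.2 t : ℤ) - lp.1 t = D t}

variable {n m M i i' : ℕ} {D : ℕ → ℤ} {l p : ℕ → ℕ}

lemma mem_contentPairs {lp : (ℕ → ℕ) × (ℕ → ℕ)} :
    lp ∈ contentPairs n m M D ↔ lp.1 ∈ piAntidiag (Icc 1 n) m ∧ lp.2 ∈ piAntidiag (Icc 1 n) M ∧
      ∀ t ∈ Icc 1 n, (lp.2 t : ℤ) - lp.1 t = D t := by
  rw [contentPairs, mem_filter, mem_product, and_assoc]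

open Classical in
/-- Pairs with given numbers of letters in `{i, i'}` are parametrised by the number of letters `i`
in the first and of letters `i'` in the second word. -/
lemma sum_contentPairs_mergeLetters_eq {A : Type*} [AddCommMonoid A]
    (hne : i ≠ i') (hi : i ∈ Icc 1 n) (hi' : i' ∈ Icc 1 n)
    (hlp : (l, p) ∈ contentPairs n m M D) (f : ℕ → ℕ → A) :
    ∑ x ∈ contentPairs n m M D with
        (mergeLetters i i' x.1, mergeLetters i' i x.2) = (mergeLetters i i' l, mergeLetters i' i p),
        f (x.1 i) (x.2 i') =
      ∑ uv ∈ antidiagonal (l i + p i') with uv.1 ≤ l i + l i' ∧ uv.2 ≤ p i' + p i,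
        f uv.1 uv.2 := by
  obtain ⟨hl, hp, hD⟩ := mem_contentPairs.1 hlp
  refine sum_nbij' (fun x => (x.1 i, x.2 i'))
    (fun uv => (Function.update (Function.update l i uv.1) i' (l i + l i' - uv.1),
      Function.update (Function.update p i (p i' + p i - uv.2)) i' uv.2)) ?_ ?_ ?_ ?_ ?_
  · rintro ⟨l', p'⟩ hx
    simp only [mem_filter, mem_contentPairs, Prod.mk.injEq, mergeLetters_eq_iff,
      HasAntidiagonal.mem_antidiagonal] at hx ⊢
    have hD' := hx.1.2.2 i hi
    have hD := hD i hi
    dsimp only at hD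
    omega
  · rintro ⟨u, v⟩ huv
    simp only [mem_filter, HasAntidiagonal.mem_antidiagonal] at huv
    have hlu : mergeLetters i i' (Function.update (Function.update l i u) i' (l i + l i' - u)) =
        mergeLetters i i' l := by
      simp only [mergeLetters_eq_iff, Function.update_apply]
      grind
    have hpv : mergeLetters i' i (Function.update (Function.update p i (p i' + p i - v)) i' v) =
        mergeLetters i' i p := by
      simp only [mergeLetters_eq_iff, Function.update_apply]
      grind
    refine mem_filter.2 ⟨mem_contentPairs.2
      ⟨mem_piAntidiag_of_mergeLetters_eq hne hi hi' hlu hl,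
        mem_piAntidiag_of_mergeLetters_eq hne.symm hi' hi hpv hp, fun t ht => ?_⟩, Prod.ext hlu hpv⟩
    have hDt := hD t ht
    have hDi := hD i hi
    have hDi' := hD i' hi'
    simp only [Function.update_apply]
    split_ifs <;> grind
  · rintro ⟨l', p'⟩ hx
    simp only [mem_filter, Prod.mk.injEq, mergeLetters_eq_iff] at hx
    refine Prod.ext (funext fun t => ?_) (funext fun t => ?_) <;>
      simp only [Function.update_apply] <;> grind
  · rintro ⟨u, v⟩ _
    simp [hne]
  · exact fun _ _ => rfl

open Classical in
lemma sum_contentPairs_mergeLetters_eq_qMultinomial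
    (hne : i ≠ i') (hi : i ∈ Icc 1 n) (hi' : i' ∈ Icc 1 n)
    (hlp : (l, p) ∈ contentPairs n m M D) (e : ℕ → ℕ → ℕ) :
    ∑ x ∈ contentPairs n m M D with
        (mergeLetters i i' x.1, mergeLetters i' i x.2) = (mergeLetters i i' l, mergeLetters i' i p),
        X ^ e (x.1 i) (x.2 i') * (qMultinomial n m x.1 * qMultinomial n M x.2) =
      (∑ uv ∈ antidiagonal (l i + p i'), X ^ e uv.1 uv.2 *
          (gaussBinom X (l i + l i') uv.1 * gaussBinom X (p i' + p i) uv.2)) *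
        (qMultinomial n m (mergeLetters i i' l) * qMultinomial n M (mergeLetters i' i p)) := by
  have hfactor (x) (hx : x ∈ {x ∈ contentPairs n m M D | (mergeLetters i i' x.1,
      mergeLetters i' i x.2) = (mergeLetters i i' l, mergeLetters i' i p)}) :
      X ^ e (x.1 i) (x.2 i') * (qMultinomial n m x.1 * qMultinomial n M x.2) =
        X ^ e (x.1 i) (x.2 i') *
          (gaussBinom X (l i + l i') (x.1 i) * gaussBinom X (p i' + p i) (x.2 i')) *
          (qMultinomial n m (mergeLetters i i' l) * qMultinomial n M (mergeLetters i' i p)) := by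
    obtain ⟨hx, hmerge⟩ := mem_filter.1 hx
    obtain ⟨hl, hp, -⟩ := mem_contentPairs.1 hx
    obtain ⟨hml, hmp⟩ := Prod.mk.inj hmerge
    rw [qMultinomial_eq_gaussBinom_mul hne hi hi' (mem_piAntidiag.1 hl).1,
      qMultinomial_eq_gaussBinom_mul hne.symm hi' hi (mem_piAntidiag.1 hp).1,
      (mergeLetters_eq_iff.1 hml).1, (mergeLetters_eq_iff.1 hmp).1, hml, hmp]
    ring
  rw [sum_congr rfl hfactor, ← sum_mul,
    sum_contentPairs_mergeLetters_eq hne hi hi' hlp fun u v => X ^ e u v *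
      (gaussBinom (X : ℤ[X]) (l i + l i') u * gaussBinom X (p i' + p i) v),
    sum_filter_of_ne fun uv _ h => ?_]
  contrapose! h
  obtain hu | hv : l i + l i' < uv.1 ∨ p i' + p i < uv.2 := by omega
  · rw [gaussBinom_eq_zero_of_lt X hu, zero_mul, mul_zero]
  · rw [gaussBinom_eq_zero_of_lt X hv, mul_zero, mul_zero]

/-- The two sides correspond to the two forms of the `q`-Vandermonde identity. -/
lemma sum_contentPairs_exchange (hi : i ∈ Icc 1 n) (hi' : i' ∈ Icc 1 n) :
    ∑ lp ∈ contentPairs n m M D,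
        X ^ (lp.1 i * lp.2 i) * (qMultinomial n m lp.1 * qMultinomial n M lp.2) =
      ∑ lp ∈ contentPairs n m M D,
        X ^ (lp.1 i' * lp.2 i') * (qMultinomial n m lp.1 * qMultinomial n M lp.2) := by
  classical
  obtain rfl | hne := eq_or_ne i i'
  · rfl
  have hmaps (x) (hx : x ∈ contentPairs n m M D) := mem_image_of_mem
    (fun x : (ℕ → ℕ) × (ℕ → ℕ) => (mergeLetters i i' x.1, mergeLetters i' i x.2)) hx
  rw [← sum_fiberwise_of_maps_to hmaps, ← sum_fiberwise_of_maps_to hmaps]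
  refine sum_congr rfl fun y hy => ?_
  obtain ⟨⟨l, p⟩, hlp, rfl⟩ := mem_image.1 hy
  have hfiber (x) (hx : x ∈ {x ∈ contentPairs n m M D | (mergeLetters i i' x.1,
      mergeLetters i' i x.2) = (mergeLetters i i' l, mergeLetters i' i p)}) :
      x.1 i' = l i + l i' - x.1 i ∧ x.2 i = p i' + p i - x.2 i' := by
    obtain ⟨hml, hmp⟩ := Prod.mk.inj (mem_filter.1 hx).2
    have hl := (mergeLetters_eq_iff.1 hml).1
    have hp := (mergeLetters_eq_iff.1 hmp).1
    omega
  rw [sum_congr rfl fun x hx => by rw [(hfiber x hx).2],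
    sum_contentPairs_mergeLetters_eq_qMultinomial hne hi hi' hlp fun u v => u * (p i' + p i - v),
    ← sum_antidiagonal_gaussBinom_comm,
    ← sum_contentPairs_mergeLetters_eq_qMultinomial hne hi hi' hlp fun u v => (l i + l i' - u) * v]
  exact sum_congr rfl fun x hx => by rw [(hfiber x hx).1]

end ContentPairs

section ClosedSums

/-- The right-hand side of the closed formula for an arbitrary missing letter `a` and last letter
`b` of the bottom row, as a sum over the pairs `(l, p)` with `p - l = D`. -/
noncomputable def closedSum (n m M a b : ℕ) (D : ℕ → ℤ) : ℤ[X] :=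
  ∑ lp ∈ contentPairs n m M D, X ^ (lp.1 b * lp.2 b + (sumAbove n lp.1 a + sumBelow n lp.2 b)) *
    (qMultinomial n m lp.1 * qMultinomial n M lp.2)

/-- The contents of words of length `M` in the letters `1, …, n` that equal `D`. There is at most
one; a set encodes that there may be none. -/
noncomputable def contentsEq (n M : ℕ) (D : ℕ → ℤ) : Finset (ℕ → ℕ) :=
  {p ∈ piAntidiag (Icc 1 n) M | ∀ t ∈ (Icc 1 n : Finset ℕ), (p t : ℤ) = D t}

/-- The closed form of the generating function of the fillings with content `D` of a column of
height `M` above a box with entry `b`. -/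
noncomputable def columnSum (n M b : ℕ) (D : ℕ → ℤ) : ℤ[X] :=
  ∑ p ∈ contentsEq n M D, X ^ sumBelow n p b * qMultinomial n M p

/-- The last entry of the row above a row with last entry `b`, when `c` is missing from it. -/
def nextLast (n b c : ℕ) : ℕ := if c = b then (if b = n then 1 else b + 1) else b

variable {n m M a b c : ℕ} {D : ℕ → ℤ}

lemma sum_contentPairs {A : Type*} [AddCommMonoid A] (f : (ℕ → ℕ) × (ℕ → ℕ) → A) :
    ∑ lp ∈ contentPairs n m M D, f lp = ∑ l ∈ piAntidiag (Icc 1 n) m,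
      ∑ p ∈ contentsEq n M fun t => D t + l t, f (l, p) := by
  simp only [contentPairs, contentsEq, sum_filter, sum_product, sub_eq_iff_eq_add]

lemma sum_contentPairs_exchange_of_const {i i' : ℕ} (hi : i ∈ Icc 1 n) (hi' : i' ∈ Icc 1 n)
    {e : (ℕ → ℕ) × (ℕ → ℕ) → ℕ} {E : ℕ} (he : ∀ lp ∈ contentPairs n m M D, e lp = E) :
    ∑ lp ∈ contentPairs n m M D, X ^ (lp.1 i * lp.2 i + e lp) *
        (qMultinomial n m lp.1 * qMultinomial n M lp.2) =
      ∑ lp ∈ contentPairs n m M D, X ^ (lp.1 i' * lp.2 i' + e lp) *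
        (qMultinomial n m lp.1 * qMultinomial n M lp.2) := by
  have hfactor (i : ℕ) := sum_congr rfl fun lp hlp =>
    show X ^ (lp.1 i * lp.2 i + e lp) * (qMultinomial n m lp.1 * qMultinomial n M lp.2) =
      X ^ E * (X ^ (lp.1 i * lp.2 i) * (qMultinomial n m lp.1 * qMultinomial n M lp.2)) by
      rw [he lp hlp]; ring
  rw [hfactor, hfactor, ← mul_sum, ← mul_sum, sum_contentPairs_exchange hi hi']

lemma sumBelow_succ (l : ℕ → ℕ) (hb : b ∈ Icc 1 n) :
    sumBelow n l (b + 1) = l b + sumBelow n l b := by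
  have h : {t ∈ Icc 1 n | t < b + 1} = insert b {t ∈ Icc 1 n | t < b} := by
    ext t
    simp only [mem_filter, mem_insert, mem_Icc] at hb ⊢
    omega
  rw [sumBelow, h, sum_insert (by simp), sumBelow]

lemma sumAbove_add_sumBelow_succ (l : ℕ → ℕ) (b : ℕ) :
    sumAbove n l b + sumBelow n l (b + 1) = ∑ t ∈ Icc 1 n, l t := by
  simp only [sumAbove, sumBelow, Nat.lt_succ_iff, ← not_lt (a := b)]
  exact sum_filter_add_sum_filter_not _ _ _

lemma sumAbove_self_right (l : ℕ → ℕ) : sumAbove n l n = 0 := by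
  rw [sumAbove, filter_false_of_mem fun t ht => not_lt.2 (mem_Icc.1 ht).2, sum_empty]

lemma sumBelow_one (l : ℕ → ℕ) : sumBelow n l 1 = 0 := by
  rw [sumBelow, filter_false_of_mem fun t ht => not_lt.2 (mem_Icc.1 ht).1, sum_empty]

lemma sumAbove_add_sumBelow_succ_of_mem {lp : (ℕ → ℕ) × (ℕ → ℕ)} (h : lp ∈ contentPairs n m M D) :
    (sumAbove n lp.1 b + sumBelow n lp.2 (b + 1) : ℤ) =
      m + ∑ t ∈ Icc 1 n with t < b + 1, D t := by
  obtain ⟨hl, -, hD⟩ := mem_contentPairs.1 h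
  have hdiff : (sumBelow n lp.2 (b + 1) : ℤ) - sumBelow n lp.1 (b + 1) =
      ∑ t ∈ Icc 1 n with t < b + 1, D t := by
    simp only [sumBelow, Nat.cast_sum, ← sum_sub_distrib]
    exact sum_congr rfl fun t ht => hD t (mem_filter.1 ht).1
  have hsum := sumAbove_add_sumBelow_succ (n := n) lp.1 b
  rw [(mem_piAntidiag.1 hl).1] at hsum
  omega

lemma pow_mul_closedSum_nextLast (hb : b ∈ Icc 1 n) :
    X ^ (if c = b ∧ b = n then M else 0) * closedSum n m M c (nextLast n b c) D =
      ∑ lp ∈ contentPairs n m M D,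
        X ^ ((lp.1 + Pi.single c 1 : ℕ → ℕ) b * lp.2 b + (sumAbove n lp.1 c + sumBelow n lp.2 b)) *
          (qMultinomial n m lp.1 * qMultinomial n M lp.2) := by
  obtain ⟨hb1, hbn⟩ := mem_Icc.1 hb
  obtain hcb | rfl := ne_or_eq c b
  · simp [hcb, Ne.symm hcb, nextLast, closedSum]
  obtain rfl | hlt := hbn.eq_or_lt
  · have hexp (lp) (hlp : lp ∈ contentPairs c m M D) :
        (lp.1 + Pi.single c 1 : ℕ → ℕ) c * lp.2 c + (sumAbove c lp.1 c + sumBelow c lp.2 c) =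
          lp.1 c * lp.2 c + M := by
      rw [← (mem_piAntidiag.1 (mem_contentPairs.1 hlp).2.1).1,
        ← sumAbove_add_sumBelow_succ lp.2 c, sumBelow_succ _ hb, sumAbove_self_right,
        sumAbove_self_right, Pi.add_apply, Pi.single_eq_same]
      ring
    rw [sum_congr rfl fun lp hlp => by rw [hexp lp hlp],
      sum_contentPairs_exchange_of_const hb (mem_Icc.2 ⟨le_rfl, hb1⟩) (fun _ _ => rfl),
      closedSum, mul_sum]
    refine sum_congr rfl fun lp _ => ?_
    simp only [nextLast, and_self, if_true, sumAbove_self_right, sumBelow_one]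
    ring
  · have hconst (lp) (hlp : lp ∈ contentPairs n m M D) :
        sumAbove n lp.1 c + sumBelow n lp.2 (c + 1) =
          (m + ∑ t ∈ Icc 1 n with t < c + 1, D t).toNat := by
      have := sumAbove_add_sumBelow_succ_of_mem (b := c) hlp
      omega
    rw [if_neg fun h => hlt.ne h.2, pow_zero, one_mul, nextLast, if_pos rfl, if_neg hlt.ne,
      closedSum, sum_contentPairs_exchange_of_const (mem_Icc.2 ⟨by omega, hlt⟩) hb hconst]
    refine sum_congr rfl fun lp _ => ?_
    rw [sumBelow_succ _ hb, Pi.add_apply, Pi.single_eq_same]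
    ring

/-- The recursion satisfied by the fillings: `c` is the letter missing from the second row. -/
theorem closedSum_succ (hb : b ∈ Icc 1 n) :
    closedSum n (m + 1) M a b D = ∑ c ∈ Icc 1 n,
      X ^ ((if a < c then m + 1 else 0) + if c = b ∧ b = n then M else 0) *
        closedSum n m M c (nextLast n b c) (D + Pi.single c 1) := by
  set F : (ℕ → ℕ) → ℤ[X] := fun l =>
    ∑ p ∈ contentsEq n M fun t => D t + l t,
      X ^ (l b * p b + sumBelow n p b) * qMultinomial n M p with hF
  have hclosed : closedSum n (m + 1) M a b D = ∑ l ∈ piAntidiag (Icc 1 n) (m + 1),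
      X ^ sumAbove n l a * qMultinomial n (m + 1) l * F l := by
    rw [closedSum, sum_contentPairs]
    refine sum_congr rfl fun l _ => ?_
    rw [hF, mul_sum]
    exact sum_congr rfl fun p _ => by ring
  rw [hclosed, sum_piAntidiag_above]
  refine sum_congr rfl fun c _ => ?_
  rw [pow_add, mul_assoc, pow_mul_closedSum_nextLast hb, sum_contentPairs, mul_sum]
  refine sum_congr rfl fun l _ => ?_
  have hD : (fun t => D t + (l + Pi.single c 1 : ℕ → ℕ) t : ℕ → ℤ) =
      fun t => (D + Pi.single c 1 : ℕ → ℤ) t + l t := by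
    ext t
    simp only [Pi.add_apply, Pi.single_apply]
    split_ifs <;> push_cast <;> ring
  simp only [hF, hD, mul_sum]
  exact sum_congr rfl fun p _ => by ring

lemma qMultinomial_zero_zero : qMultinomial n 0 0 = 1 := by
  simpa using qMultinomial_mul_prod_qFactorial (n := n) (l := 0) (sum_const_zero)

lemma closedSum_zero : closedSum n 0 M a b D = columnSum n M b D := by
  rw [closedSum, sum_contentPairs, piAntidiag_zero, sum_singleton, columnSum]
  simp [qMultinomial_zero_zero, sumAbove]

lemma columnSum_eq_sum_ite : columnSum n M b D = ∑ p ∈ piAntidiag (Icc 1 n) M,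
    X ^ sumBelow n p b * qMultinomial n M p *
      if ∀ t ∈ (Icc 1 n : Finset ℕ), (p t : ℤ) = D t then 1 else 0 := by
  simp only [columnSum, contentsEq, sum_filter, mul_ite, mul_one, mul_zero]

lemma columnSum_zero :
    columnSum n 0 b D = if ∀ t ∈ (Icc 1 n : Finset ℕ), D t = 0 then 1 else 0 := by
  simp [columnSum_eq_sum_ite, qMultinomial_zero_zero, sumBelow, eq_comm]

lemma columnSum_succ : columnSum n (M + 1) b D =
    ∑ c ∈ Icc 1 n, X ^ (if c < b then M + 1 else 0) * columnSum n M c (D - Pi.single c 1) := by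
  rw [columnSum_eq_sum_ite, sum_piAntidiag_below]
  refine sum_congr rfl fun c _ => ?_
  rw [columnSum_eq_sum_ite, mul_sum]
  refine sum_congr rfl fun p _ => ?_
  have hD : (∀ t ∈ Icc 1 n, ((p + Pi.single c 1 : ℕ → ℕ) t : ℤ) = D t) ↔
      ∀ t ∈ Icc 1 n, (p t : ℤ) = (D - Pi.single c 1 : ℕ → ℤ) t := forall₂_congr fun t _ => by
    simp only [Pi.add_apply, Pi.sub_apply, Pi.single_apply]
    grind
  rw [if_congr hD rfl rfl]
  ring

end ClosedSums

section CyclicSuccessor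

open Classical in
/-- The value prescribed by the greedy rule (iii): the first element of `S` met when going up
cyclically from `x`. -/
noncomputable def cyclicSucc (S : Set ℕ) (x : ℕ) : ℕ :=
  if {s ∈ S | x ≤ s}.Nonempty then sInf {s ∈ S | x ≤ s} else sInf S

variable {S : Set ℕ} {x : ℕ}

lemma isLeast_cyclicSucc (hS : S.Nonempty) (x : ℕ) :
    IsLeast {s ∈ S | x ≤ s} (cyclicSucc S x) ∨
      (∀ s ∈ S, s < x) ∧ IsLeast S (cyclicSucc S x) := by
  rw [cyclicSucc]
  split_ifs with h
  · exact .inl (isLeast_csInf h)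
  · exact .inr ⟨fun s hs => not_le.1 fun hxs => h ⟨s, hs, hxs⟩, isLeast_csInf hS⟩

lemma cyclicSucc_mem (hS : S.Nonempty) : cyclicSucc S x ∈ S :=
  (isLeast_cyclicSucc hS x).elim (fun h => h.1.1) fun h => h.2.1

lemma cyclicSucc_of_mem (hx : x ∈ S) : cyclicSucc S x = x := by
  rcases isLeast_cyclicSucc ⟨x, hx⟩ x with h | h
  · exact le_antisymm (h.2 ⟨hx, le_rfl⟩) h.1.2
  · exact absurd (h.1 x hx) (lt_irrefl x)

lemma ite_lt_cyclicSucc_add {a : ℕ} (ha : a ∈ S) :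
    (if a < cyclicSucc S x then 1 else 0) + (if cyclicSucc S x < x then 1 else 0) =
      if a < x then 1 else 0 := by
  rcases isLeast_cyclicSucc ⟨a, ha⟩ x with ⟨⟨-, hle⟩, hmin⟩ | ⟨hlt, hmem, hmin⟩
  · have hmin : x ≤ a → cyclicSucc S x ≤ a := fun hxa => hmin ⟨ha, hxa⟩
    grind
  · have hax := hlt a ha
    have hsx := hlt _ hmem
    have hsa := hmin ha
    grind

end CyclicSuccessor

section Rows

/-- The columns of the diagram of `lam` that meet row `r + 1`. -/
def cols (n : ℕ) (lam : ℕ → ℕ) (r : ℕ) : Finset ℕ := {i ∈ Icc 1 n | r < lam i}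

/-- The row `z` on the columns `C'` (extended by zero) can be put on top of the row `x` on the
columns `C` in a filling satisfying (ii) and (iii) of an antidominant shape. -/
structure IsNextRow (n : ℕ) (C C' : Finset ℕ) (x z : ℕ → ℕ) : Prop where
  eq_zero : ∀ i ∉ C', z i = 0
  mem : ∀ i ∈ C', z i ∈ Icc 1 n
  injOn : Set.InjOn z C'
  ne_of_lt : ∀ i ∈ C', ∀ i' ∈ C, i < i' → z i ≠ x i'
  greedy : ∀ i ∈ C', z i = cyclicSucc (z '' {i' | i' ∈ C' ∧ i' ≤ i}) (x i)

/-- The bottom row prescribed by (i), extended by zero to the empty columns. -/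
def bottomRow (n : ℕ) (lam a : ℕ → ℕ) : ℕ → ℕ := fun i => if i ∈ cols n lam 0 then a i else 0

/-- The rows of a filling of an antidominant shape satisfying (i), (ii) and (iii), the entry of the
box `(i, r + 1)` being `R r i`. -/
def IsGreedyFilling (n : ℕ) (lam a : ℕ → ℕ) (R : ℕ → ℕ → ℕ) : Prop :=
  R 0 = bottomRow n lam a ∧
    ∀ r, IsNextRow n (cols n lam r) (cols n lam (r + 1)) (R r) (R (r + 1))

/-- The number of boxes with entry `t` in the filling with rows `R`. -/
def content (n : ℕ) (lam : ℕ → ℕ) (R : ℕ → ℕ → ℕ) (t : ℕ) : ℕ :=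
  ∑ i ∈ Icc 1 n, #{r ∈ range (lam i) | R r i = t}

/-- The statistic `asc` of the filling with rows `R`. -/
def ascRows (n : ℕ) (lam : ℕ → ℕ) (R : ℕ → ℕ → ℕ) : ℕ :=
  ∑ i ∈ Icc 1 n, ∑ r ∈ range (lam i - 1), if R (r + 1) i < R r i then lam i - 1 - r else 0

open Classical in
/-- The sequences of rows of the fillings of the diagram of `lam` with entries in `{1, …, n}`. -/
noncomputable def rowFillings (n : ℕ) (lam : ℕ → ℕ) : Finset (ℕ → ℕ → ℕ) :=
  (Fintype.piFinset fun _ : {u // u ∈ dgF n lam} => Icc 1 n).image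
    fun f r i => ext n lam f (i, r + 1)

open Classical in
/-- The rows of the fillings counted by `c_a^lam(K)`. The content `K` is integer-valued so that
the content of a row can be subtracted from it. -/
noncomputable def greedyFillings (n : ℕ) (lam a : ℕ → ℕ) (K : ℕ → ℤ) : Finset (ℕ → ℕ → ℕ) :=
  {R ∈ rowFillings n lam |
    IsGreedyFilling n lam a R ∧ ∀ t ∈ Icc 1 n, (content n lam R t : ℤ) = K t}

/-- The generating function of `asc` over `greedyFillings`. -/
noncomputable def greedySum (n : ℕ) (lam a : ℕ → ℕ) (K : ℕ → ℤ) : ℤ[X] :=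
  ∑ R ∈ greedyFillings n lam a K, X ^ ascRows n lam R

variable {n : ℕ} {lam a : ℕ → ℕ} {K : ℕ → ℤ} {R : ℕ → ℕ → ℕ}

lemma mem_cols {r i : ℕ} : i ∈ cols n lam r ↔ i ∈ Icc 1 n ∧ r < lam i := by rw [cols, mem_filter]

lemma bottomRow_of_mem {i : ℕ} (hi : i ∈ cols n lam 0) : bottomRow n lam a i = a i := if_pos hi

lemma mem_dgF {u : ℕ × ℕ} : u ∈ dgF n lam ↔ u.1 ∈ Icc 1 n ∧ 1 ≤ u.2 ∧ u.2 ≤ lam u.1 := by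
  obtain ⟨i, j⟩ := u
  simp [dgF]

lemma mk_succ_mem_dgF {r i : ℕ} : (i, r + 1) ∈ dgF n lam ↔ i ∈ cols n lam r := by
  simp [mem_dgF, mem_cols, Nat.succ_le_iff]

lemma forall_mem_dgF {P : ℕ × ℕ → Prop} :
    (∀ u ∈ dgF n lam, P u) ↔ ∀ r, ∀ i ∈ cols n lam r, P (i, r + 1) := by
  refine ⟨fun h r i hi => h _ (mk_succ_mem_dgF.2 hi), fun h u hu => ?_⟩
  obtain ⟨i, _ | r⟩ := u
  · exact absurd (mem_dgF.1 hu).2.1 (by simp)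
  · exact h r i (mk_succ_mem_dgF.1 hu)

lemma sum_dgF {A : Type*} [AddCommMonoid A] (f : ℕ × ℕ → A) :
    ∑ u ∈ dgF n lam, f u = ∑ i ∈ Icc 1 n, ∑ r ∈ range (lam i), f (i, r + 1) := by
  rw [sum_sigma']
  refine sum_nbij' (fun u => ⟨u.1, u.2 - 1⟩) (fun p => (p.1, p.2 + 1)) ?_ ?_ ?_ ?_ ?_
  all_goals
    rintro ⟨i, j⟩ hu
    simp only [mem_dgF, mem_sigma, mem_range] at hu ⊢
    grind

lemma mem_rowFillings : R ∈ rowFillings n lam ↔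
    ∀ r i, if i ∈ cols n lam r then R r i ∈ Icc 1 n else R r i = 0 := by
  classical
  simp only [rowFillings, mem_image, Fintype.mem_piFinset]
  constructor
  · rintro ⟨f, hf, rfl⟩ r i
    split_ifs with hi
    · simpa only [ext, dif_pos (mk_succ_mem_dgF.2 hi)] using hf _
    · exact dif_neg (mt mk_succ_mem_dgF.1 hi)
  · refine fun h => ⟨fun u => R (u.1.2 - 1) u.1.1, fun ⟨u, hu⟩ => ?_, funext₂ fun r i => ?_⟩
    · exact (forall_mem_dgF (P := fun u => R (u.2 - 1) u.1 ∈ Icc 1 n)).2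
        (fun r i hi => by simpa only [if_pos hi, Nat.add_sub_cancel] using h r i) u hu
    · by_cases hi : i ∈ cols n lam r
      · simp only [ext, dif_pos (mk_succ_mem_dgF.2 hi), Nat.add_sub_cancel]
      · simpa [ext, mk_succ_mem_dgF, hi, eq_comm] using h r i

lemma mem_greedyFillings (ha : ∀ i ∈ cols n lam 0, a i ∈ Icc 1 n) :
    R ∈ greedyFillings n lam a K ↔
      IsGreedyFilling n lam a R ∧ ∀ t ∈ Icc 1 n, (content n lam R t : ℤ) = K t := by
  simp only [greedyFillings, mem_filter, and_iff_right_iff_imp]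
  rintro ⟨⟨hbot, hnext⟩, -⟩
  refine mem_rowFillings.2 fun r i => ?_
  obtain _ | r := r
  · rw [hbot]
    split_ifs with hi
    exacts [bottomRow_of_mem hi ▸ ha i hi, if_neg hi]
  · split_ifs with hi
    exacts [(hnext r).mem i hi, (hnext r).eq_zero i hi]

end Rows

section RowDecomposition

variable {n r i : ℕ} {lam a : ℕ → ℕ} {τ : ℕ × ℕ → ℕ}

lemma mem_armF (hlam : Antidominant n lam) (hi : i ∈ cols n lam (r + 1)) {v : ℕ × ℕ} :
    v ∈ armF n lam (i, r + 2) ↔ v.1 ∈ cols n lam (r + 1) ∧ v.1 < i ∧ v.2 = r + 2 := by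
  rw [mem_cols, mem_Icc] at hi
  have hleft : v ∈ dgF n lam ∧ v.1 < i ∧ v.2 = r + 2 ∧ lam v.1 ≤ lam i ↔
      v.1 ∈ cols n lam (r + 1) ∧ v.1 < i ∧ v.2 = r + 2 := by
    rw [mem_dgF, mem_cols, mem_Icc]
    have := hlam v.1 i
    omega
  have hright : ¬ (v ∈ augF n lam ∧ i < v.1 ∧ v.2 + 1 = r + 2 ∧ lam v.1 < lam i) := by
    rintro ⟨hv, hlt, -, hlam_lt⟩
    have hv₁ : v.1 ≤ n := by
      rcases mem_union.1 hv with hv | hv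
      · exact (mem_Icc.1 (mem_dgF.1 hv).1).2
      · obtain ⟨c, hc, rfl⟩ := mem_image.1 hv
        exact (mem_Icc.1 hc).2
    exact (hlam i v.1 hi.1.1 hlt.le hv₁).not_gt hlam_lt
  rw [armF, mem_union, mem_filter, mem_filter, hleft, or_iff_left hright]

lemma image_armF_union (hlam : Antidominant n lam) (hi : i ∈ cols n lam (r + 1)) :
    τ '' armF n lam (i, r + 2) ∪ {τ (i, r + 2)} =
      (fun i' => τ (i', r + 2)) '' {i' | i' ∈ cols n lam (r + 1) ∧ i' ≤ i} := by
  ext y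
  simp only [Set.mem_union, Set.mem_image, mem_coe, mem_armF hlam hi, Set.mem_singleton_iff,
    Set.mem_ofPred_eq, Prod.exists]
  constructor
  · rintro (⟨i', _, ⟨hi', hlt, rfl⟩, rfl⟩ | rfl)
    exacts [⟨i', ⟨hi', hlt.le⟩, rfl⟩, ⟨i, ⟨hi, le_rfl⟩, rfl⟩]
  · rintro ⟨i', ⟨hi', hle⟩, rfl⟩
    rcases hle.lt_or_eq with hlt | rfl
    exacts [.inl ⟨i', _, ⟨hi', hlt, rfl⟩, rfl⟩, .inr rfl]

lemma greedyRule_iff (hlam : Antidominant n lam) :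
    GreedyRule n lam τ ↔ ∀ r, ∀ i ∈ cols n lam (r + 1), τ (i, r + 2) =
      cyclicSucc ((fun i' => τ (i', r + 2)) '' {i' | i' ∈ cols n lam (r + 1) ∧ i' ≤ i})
        (τ (i, r + 1)) := by
  rw [GreedyRule, forall_mem_dgF, ← Nat.and_forall_add_one,
    and_iff_right fun _ _ h => absurd h (by simp)]
  refine forall₃_congr fun r i hi => ?_
  rw [forall_prop_of_true (by simp), image_armF_union hlam hi, cyclicSucc]
  simp only [dbox, Nat.add_sub_cancel]
  split_ifs with h
  · exact ⟨fun hu => hu.1 h, fun hu => ⟨fun _ => hu, fun hn => absurd h hn⟩⟩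
  · exact ⟨fun hu => hu.2 h, fun hu => ⟨fun hn => absurd hn h, fun _ => hu⟩⟩

lemma forall_attack_iff :
    (∀ u ∈ dgF n lam, ∀ v ∈ dgF n lam, Attack u v → τ u ≠ τ v) ↔
      (∀ r, Set.InjOn (fun i => τ (i, r + 1)) (cols n lam r)) ∧
        ∀ r, ∀ i ∈ cols n lam (r + 1), ∀ i' ∈ cols n lam r,
          i < i' → τ (i, r + 2) ≠ τ (i', r + 1) := by
  simp only [forall_mem_dgF]
  refine ⟨fun h => ⟨fun r i hi i' hi' heq => ?_, fun r i hi i' hi' hlt => ?_⟩, ?_⟩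
  · by_contra hne
    exact h r i hi r i' hi' ⟨by simp [hne], .inl rfl⟩ heq
  · exact h (r + 1) i hi r i' hi' ⟨by simp, .inr (.inl ⟨rfl, hlt⟩)⟩
  · rintro ⟨hinj, hne⟩ r i hi r' i' hi' ⟨huv, hrow | ⟨hrow, hlt⟩ | ⟨hrow, hlt⟩⟩
    · obtain rfl : r = r' := by simpa using hrow
      exact fun heq => huv (by rw [hinj r hi hi' heq])
    · obtain rfl : r = r' + 1 := by simpa using hrow
      exact hne r' i hi i' hi' hlt
    · obtain rfl : r' = r + 1 := by simpa using hrow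
      exact (hne r i' hi' i hi hlt).symm

lemma card_filter_dgF (t : ℕ) :
    #{u ∈ dgF n lam | τ u = t} = content n lam (fun r i => τ (i, r + 1)) t := by
  simp only [content, card_filter, sum_dgF]

lemma ascStat_eq : ascStat n lam τ = ascRows n lam fun r i => τ (i, r + 1) := by
  rw [ascStat, ascRows, sum_filter, sum_dgF]
  refine sum_congr rfl fun i _ => ?_
  rcases h : lam i with _ | L
  · simp
  · rw [sum_range_succ', if_neg (by simp), add_zero]
    refine sum_congr rfl fun r hr => if_congr (by simp [dbox]) ?_ rfl
    have := mem_range.1 hr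
    simp only [h]
    omega

lemma cCond_iff (hlam : Antidominant n lam) (ha : ∀ i ∈ cols n lam 0, a i ∈ Icc 1 n)
    (hinj : Set.InjOn a (cols n lam 0)) {k : ℕ → ℕ} (hτ : ∀ u ∉ dgF n lam, τ u = 0) :
    CCond n lam a k τ ↔ IsGreedyFilling n lam a (fun r i => τ (i, r + 1)) ∧
      ∀ t ∈ Icc 1 n, (content n lam (fun r i => τ (i, r + 1)) t : ℤ) = k t := by
  have hzero (r i : ℕ) (hi : i ∉ cols n lam r) : τ (i, r + 1) = 0 := hτ _ (mt mk_succ_mem_dgF.1 hi)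
  have hbot : (∀ i, (i, 1) ∈ dgF n lam → τ (i, 1) = a i) ↔
      (fun i => τ (i, 0 + 1)) = bottomRow n lam a := by
    simp only [funext_iff, bottomRow]
    refine forall_congr' fun i => ?_
    rw [← zero_add 1, mk_succ_mem_dgF]
    split_ifs with hi <;> simp [hi, hzero 0 i]
  rw [CCond, hbot, forall_attack_iff, greedyRule_iff hlam, forall_mem_dgF]
  simp only [card_filter_dgF, Nat.cast_inj, mem_Icc, and_imp]
  constructor
  · rintro ⟨hmem, hrow, ⟨hinjOn, hne⟩, hgreedy, hcontent⟩
    exact ⟨⟨hrow, fun r => ⟨hzero (r + 1), fun i hi => mem_Icc.2 (hmem _ i hi), hinjOn (r + 1),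
      hne r, hgreedy r⟩⟩, hcontent⟩
  · rintro ⟨⟨hrow, hnext⟩, hcontent⟩
    refine ⟨?_, hrow, ⟨?_, fun r => (hnext r).ne_of_lt⟩, fun r => (hnext r).greedy, hcontent⟩ <;>
      rintro (_ | r)
    · intro i hi
      rw [show τ (i, 0 + 1) = a i from (congrFun hrow i).trans (bottomRow_of_mem hi)]
      exact mem_Icc.1 (ha i hi)
    · exact fun i hi => mem_Icc.1 ((hnext r).mem i hi)
    · exact hinj.congr fun i hi => ((congrFun hrow i).trans (bottomRow_of_mem hi)).symm
    · exact (hnext r).injOn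

theorem cCoef_eq_greedySum (hlam : Antidominant n lam) (ha : ∀ i ∈ cols n lam 0, a i ∈ Icc 1 n)
    (hinj : Set.InjOn a (cols n lam 0)) (k : ℕ → ℕ) :
    cCoef n lam a k = greedySum n lam a fun t => k t := by
  classical
  have hiff (f) := cCond_iff hlam ha hinj (k := k) (τ := ext n lam f) fun u hu => dif_neg hu
  refine sum_bij (fun f _ r i => ext n lam f (i, r + 1)) ?_ ?_ ?_ fun f _ => by rw [ascStat_eq]
  · intro f hf
    simp only [mem_filter, hiff] at hf
    exact (mem_greedyFillings ha).2 hf.2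
  · intro f _ f' _ heq
    have h : ∀ u ∈ dgF n lam, ext n lam f u = ext n lam f' u :=
      forall_mem_dgF.2 fun r i _ => congrFun₂ heq r i
    refine funext fun ⟨u, hu⟩ => ?_
    simpa only [ext, dif_pos hu] using h u hu
  · intro R hR
    simp only [greedyFillings, rowFillings, mem_filter, mem_image] at hR
    obtain ⟨⟨f, hf, rfl⟩, hR⟩ := hR
    exact ⟨f, mem_filter.2 ⟨hf, (hiff f).2 hR⟩, rfl⟩

end RowDecomposition

section BottomRow

variable {n : ℕ} {lam a : ℕ → ℕ} {K : ℕ → ℤ} {R : ℕ → ℕ → ℕ}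

lemma cols_tsub_one (r : ℕ) : cols n (fun i => lam i - 1) r = cols n lam (r + 1) :=
  filter_congr fun _ _ => Nat.lt_sub_iff_add_lt

lemma cols_anti : Antitone (cols n lam) := fun _ _ h _ hi =>
  mem_cols.2 ⟨(mem_cols.1 hi).1, h.trans_lt (mem_cols.1 hi).2⟩

lemma isNextRow_congr {C C' : Finset ℕ} {x x' z : ℕ → ℕ} (hC : C' ⊆ C)
    (hx : ∀ i ∈ C, x i = x' i) : IsNextRow n C C' x z ↔ IsNextRow n C C' x' z := by
  constructor <;> rintro ⟨h₁, h₂, h₃, h₄, h₅⟩ <;> refine ⟨h₁, h₂, h₃, ?_, ?_⟩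
  · exact fun i hi i' hi' => hx i' hi' ▸ h₄ i hi i' hi'
  · exact fun i hi => hx i (hC hi) ▸ h₅ i hi
  · exact fun i hi i' hi' => (hx i' hi').symm ▸ h₄ i hi i' hi'
  · exact fun i hi => (hx i (hC hi)).symm ▸ h₅ i hi

lemma isGreedyFilling_iff_tail : IsGreedyFilling n lam a R ↔
    R 0 = bottomRow n lam a ∧
      IsNextRow n (cols n lam 0) (cols n lam 1) a (R 1) ∧
        IsGreedyFilling n (fun i => lam i - 1) (R 1) fun r => R (r + 1) := by
  simp only [IsGreedyFilling, cols_tsub_one, zero_add]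
  refine and_congr_right fun hbot => ?_
  have hcongr : IsNextRow n (cols n lam 0) (cols n lam 1) (R 0) (R 1) ↔
      IsNextRow n (cols n lam 0) (cols n lam 1) a (R 1) :=
    isNextRow_congr (cols_anti zero_le_one) fun i hi => by rw [hbot, bottomRow_of_mem hi]
  rw [← Nat.and_forall_add_one, zero_add, hcongr]
  refine and_congr_right fun hnext => (and_iff_right (_root_.funext fun i => ?_)).symm
  rw [bottomRow, cols_tsub_one]
  split_ifs with hi
  exacts [rfl, hnext.eq_zero i hi]

lemma content_eq_add_tail (hbot : R 0 = bottomRow n lam a) (t : ℕ) :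
    content n lam R t = #{i ∈ cols n lam 0 | a i = t} +
      content n (fun i => lam i - 1) (fun r => R (r + 1)) t := by
  have hfirst : #{i ∈ cols n lam 0 | a i = t} =
      ∑ i ∈ Icc 1 n, if 0 < lam i ∧ a i = t then 1 else 0 := by
    rw [cols, filter_filter, card_filter]
  rw [content, content, hfirst, ← sum_add_distrib]
  refine sum_congr rfl fun i hi => ?_
  simp only [card_filter]
  rcases h : lam i with _ | L
  · simp
  · rw [sum_range_succ', hbot, bottomRow_of_mem (mem_cols.2 ⟨hi, by omega⟩), add_comm]
    simp

lemma ascRows_eq_add_tail (hbot : R 0 = bottomRow n lam a) :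
    ascRows n lam R = (∑ i ∈ cols n lam 1, if R 1 i < a i then lam i - 1 else 0) +
      ascRows n (fun i => lam i - 1) fun r => R (r + 1) := by
  rw [ascRows, ascRows, cols, sum_filter, ← sum_add_distrib]
  refine sum_congr rfl fun i hi => ?_
  rcases h : lam i with _ | _ | L
  · simp
  · simp
  · rw [Nat.add_sub_cancel, Nat.add_sub_cancel, sum_range_succ', hbot,
      bottomRow_of_mem (mem_cols.2 ⟨hi, by omega⟩), add_comm, if_pos (Nat.one_lt_succ_succ L)]
    simp only [Nat.add_sub_add_right, Nat.sub_zero, zero_add]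

lemma mem_greedyFillings_iff_tail (ha : ∀ i ∈ cols n lam 0, a i ∈ Icc 1 n) :
    R ∈ greedyFillings n lam a K ↔ R 0 = bottomRow n lam a ∧
      IsNextRow n (cols n lam 0) (cols n lam 1) a (R 1) ∧
        (fun r => R (r + 1)) ∈ greedyFillings n (fun i => lam i - 1) (R 1)
          fun t => K t - #{i ∈ cols n lam 0 | a i = t} := by
  rw [mem_greedyFillings ha, isGreedyFilling_iff_tail, and_assoc, and_assoc]
  refine and_congr_right fun hbot => and_congr_right fun hnext => ?_
  rw [mem_greedyFillings fun i hi => hnext.mem i (cols_tsub_one 0 ▸ hi)]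
  refine and_congr_right fun _ => forall₂_congr fun t _ => ?_
  rw [content_eq_add_tail hbot, Nat.cast_add, eq_sub_iff_add_eq']

theorem greedySum_eq_sum_nextRow {Z : Finset (ℕ → ℕ)}
    (hZ : ∀ z, z ∈ Z ↔ IsNextRow n (cols n lam 0) (cols n lam 1) a z)
    (ha : ∀ i ∈ cols n lam 0, a i ∈ Icc 1 n) :
    greedySum n lam a K = ∑ z ∈ Z,
      X ^ (∑ i ∈ cols n lam 1, if z i < a i then lam i - 1 else 0) *
        greedySum n (fun i => lam i - 1) z fun t => K t - #{i ∈ cols n lam 0 | a i = t} := by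
  simp only [greedySum, mul_sum, sum_sigma']
  have htail {z R K'} (hz : z ∈ Z) (hR : R ∈ greedyFillings n (fun i => lam i - 1) z K') :
      R 0 = z := by
    rw [hZ] at hz
    have hmem := (mem_greedyFillings fun i hi => hz.mem i (cols_tsub_one 0 ▸ hi)).1 hR
    refine hmem.1.1.trans (_root_.funext fun i => ?_)
    rw [bottomRow, cols_tsub_one]
    split_ifs with hi
    exacts [rfl, (hz.eq_zero i hi).symm]
  refine sum_nbij' (fun R => ⟨R 1, fun r => R (r + 1)⟩)
    (fun p r => match r with
      | 0 => bottomRow n lam a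
      | r + 1 => p.2 r) ?_ ?_ ?_ ?_ ?_
  · intro R hR
    obtain ⟨-, hnext, hR⟩ := (mem_greedyFillings_iff_tail ha).1 hR
    exact mem_sigma.2 ⟨(hZ _).2 hnext, hR⟩
  · rintro ⟨z, R⟩ hp
    obtain ⟨hz, hR⟩ := mem_sigma.1 hp
    obtain rfl : R 0 = z := htail hz hR
    exact (mem_greedyFillings_iff_tail ha).2 ⟨rfl, (hZ _).1 hz, hR⟩
  · intro R hR
    refine _root_.funext fun r => ?_
    obtain _ | r := r
    exacts [((mem_greedyFillings_iff_tail ha).1 hR).1.symm, rfl]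
  · rintro ⟨z, R⟩ hp
    obtain ⟨hz, hR⟩ := mem_sigma.1 hp
    obtain rfl : R 0 = z := htail hz hR
    rfl
  · intro R hR
    rw [ascRows_eq_add_tail ((mem_greedyFillings_iff_tail ha).1 hR).1, pow_add]

end BottomRow

section Column

variable {n M : ℕ} {lam a : ℕ → ℕ} {K : ℕ → ℤ}

lemma isNextRow_empty {C : Finset ℕ} {x z : ℕ → ℕ} : IsNextRow n C ∅ x z ↔ z = 0 := by
  refine ⟨fun h => _root_.funext fun i => h.eq_zero i (notMem_empty i), ?_⟩
  rintro rfl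
  exact ⟨fun _ _ => rfl, by simp, by simp, by simp, by simp⟩

lemma isNextRow_singleton {C : Finset ℕ} (hC : C ⊆ Icc 1 n) {x z : ℕ → ℕ} :
    IsNextRow n C {n} x z ↔ ∃ c ∈ Icc 1 n, Pi.single n c = z := by
  constructor
  · refine fun h => ⟨z n, h.mem n (mem_singleton_self n), _root_.funext fun i => ?_⟩
    by_cases hi : i = n
    · rw [hi, Pi.single_eq_same]
    · rw [Pi.single_eq_of_ne hi, h.eq_zero i (notMem_singleton.2 hi)]
  · rintro ⟨c, hc, rfl⟩
    refine ⟨fun i hi => ?_, ?_, ?_, ?_, ?_⟩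
    · rw [Pi.single_eq_of_ne (notMem_singleton.1 hi)]
    · simpa using hc
    · simp
    · rintro i hi i' hi' hlt
      exact absurd (mem_singleton.1 hi ▸ hlt) (mem_Icc.1 (hC hi')).2.not_gt
    · intro i hi
      obtain ⟨i', hi', heq⟩ := cyclicSucc_mem (x := x i) ⟨_, Set.mem_image_of_mem
        (Pi.single n c : ℕ → ℕ) (show i ∈ {i' | i' ∈ ({n} : Finset ℕ) ∧ i' ≤ i} from ⟨hi, le_rfl⟩)⟩
      rw [← heq, mem_singleton.1 hi, mem_singleton.1 hi'.1]

lemma greedySum_of_cols_eq_empty (h : cols n lam 0 = ∅) :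
    greedySum n lam a K = if ∀ t ∈ (Icc 1 n : Finset ℕ), K t = 0 then 1 else 0 := by
  have hcols (r : ℕ) : cols n lam r = ∅ := subset_empty.1 (h ▸ cols_anti r.zero_le)
  have hlam (i : ℕ) (hi : i ∈ Icc 1 n) : lam i = 0 :=
    Nat.eq_zero_of_not_pos fun hpos => notMem_empty i (h ▸ mem_cols.2 ⟨hi, hpos⟩)
  have hbot : bottomRow n lam a = 0 := _root_.funext fun i => if_neg (h ▸ notMem_empty i)
  have hfilling (R : ℕ → ℕ → ℕ) : IsGreedyFilling n lam a R ↔ R = 0 := by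
    simp only [IsGreedyFilling, hcols, isNextRow_empty, hbot]
    exact (Nat.and_forall_add_one (p := fun r => R r = 0)).trans funext_iff.symm
  have hcontent (t : ℕ) : content n lam 0 t = 0 := sum_eq_zero fun i hi => by simp [hlam i hi]
  have hasc : ascRows n lam 0 = 0 := sum_eq_zero fun i hi => by simp [hlam i hi]
  have hmem (R : ℕ → ℕ → ℕ) : R ∈ greedyFillings n lam a K ↔
      R = 0 ∧ ∀ t ∈ (Icc 1 n : Finset ℕ), K t = 0 := by
    rw [mem_greedyFillings (by simp [h]), hfilling]
    refine and_congr_right fun hR => forall₂_congr fun t _ => ?_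
    rw [hR, hcontent, Nat.cast_zero, eq_comm]
  rw [greedySum]
  split_ifs with hK
  · rw [eq_singleton_iff_unique_mem.2 ⟨(hmem 0).2 ⟨rfl, hK⟩, fun R hR => ((hmem R).1 hR).1⟩,
      sum_singleton, hasc, pow_zero]
  · rw [eq_empty_of_forall_notMem fun R hR => hK ((hmem R).1 hR).2, sum_empty]

theorem greedySum_eq_columnSum (hn : n ∈ Icc 1 n) (hlast : lam n = M + 1)
    (hlam : ∀ i ∈ Icc 1 n, i ≠ n → lam i ≤ 1) (ha : ∀ i ∈ cols n lam 0, a i ∈ Icc 1 n) :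
    greedySum n lam a K =
      columnSum n M (a n) fun t => K t - #{i ∈ cols n lam 0 | a i = t} := by
  classical
  induction M generalizing lam a K with
  | zero =>
    have hcols : cols n lam 1 = ∅ := eq_empty_of_forall_notMem fun i hi => by
      obtain ⟨hi, hlt⟩ := mem_cols.1 hi
      have := hlam i hi
      grind
    rw [greedySum_eq_sum_nextRow (Z := {0}) (fun z => by rw [hcols, isNextRow_empty, mem_singleton])
      ha, sum_singleton, hcols, sum_empty, pow_zero, one_mul,
      greedySum_of_cols_eq_empty (by rw [cols_tsub_one, hcols]), columnSum_zero]
  | succ M ih =>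
    have hcols : cols n lam 1 = {n} := by
      ext i
      rw [mem_cols, mem_singleton]
      have := hlam i
      grind
    have hsub : cols n lam 0 ⊆ Icc 1 n := filter_subset _ _
    rw [greedySum_eq_sum_nextRow (Z := (Icc 1 n).image (Pi.single n))
      (fun z => by rw [hcols, isNextRow_singleton hsub, mem_image]) ha,
      sum_image (Pi.single_injective n).injOn, columnSum_succ]
    refine sum_congr rfl fun c hc => ?_
    rw [hcols, sum_singleton, hlast, Pi.single_eq_same, ih, Pi.single_eq_same, cols_tsub_one, hcols]
    · congr 2
      ext t
      simp only [Pi.sub_apply, filter_singleton, Pi.single_apply, eq_comm (a := t)]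
      split_ifs <;> simp
    · simp [hlast]
    · intro i hi hne
      have := hlam i hi hne
      omega
    · rw [cols_tsub_one, hcols]
      simpa using hc

end Column

section NextRow

open Function

/-- The letters `a, x₂, …, x_{N+1}`: a row `x` on the columns `2, …, N + 1` together with a
letter `a`, usually the one missing from it. -/
def rowLetters (x : ℕ → ℕ) (a N : ℕ) : Finset ℕ := insert a ((Icc 2 (N + 1)).image x)

/-- The row on top of the row `x` on the columns `2, …, N + 1` when `a` is missing from `x` and `c`
is to be missing from the new row: it is filled from the right, an entry of `x` being kept unless
it is the letter to be missed. -/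
noncomputable def nextRow (x : ℕ → ℕ) (a : ℕ) : ℕ → ℕ → ℕ → ℕ
  | 0, _ => 0
  | N + 1, c =>
    let s := cyclicSucc (rowLetters x a N) (x (N + 2))
    if c = x (N + 2) then update (nextRow x a N s) (N + 2) s
    else update (nextRow x a N c) (N + 2) (x (N + 2))

variable {x z : ℕ → ℕ} {a c N : ℕ}

lemma Icc_two_add_two : Icc 2 (N + 2) = insert (N + 2) (Icc 2 (N + 1)) :=
  (insert_Icc_right_eq_Icc_add_one (by omega)).symm

lemma mem_rowLetters_self : a ∈ rowLetters x a N := mem_insert_self _ _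

lemma rowLetters_succ : rowLetters x a (N + 1) = insert (x (N + 2)) (rowLetters x a N) := by
  rw [rowLetters, Icc_two_add_two, image_insert, insert_comm, rowLetters]

lemma image_update_last (v : ℕ) : (Icc 2 (N + 2)).image (update z (N + 2) v) =
    insert v ((Icc 2 (N + 1)).image z) := by
  rw [Icc_two_add_two, image_insert, update_self]
  refine congrArg _ (image_congr fun i hi => update_of_ne ?_ _ _)
  have := (mem_Icc.1 hi).2
  omega

lemma rowLetters_update_last (v : ℕ) :
    rowLetters (update z (N + 2) v) c (N + 1) = insert v (rowLetters z c N) := by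
  rw [rowLetters, image_update_last, insert_comm, rowLetters]

lemma nextRow_succ_of_eq (hc : c = x (N + 2)) : nextRow x a (N + 1) c =
    update (nextRow x a N (cyclicSucc (rowLetters x a N) (x (N + 2)))) (N + 2)
      (cyclicSucc (rowLetters x a N) (x (N + 2))) := if_pos hc

lemma nextRow_succ_of_ne (hc : c ≠ x (N + 2)) :
    nextRow x a (N + 1) c = update (nextRow x a N c) (N + 2) (x (N + 2)) := if_neg hc

lemma cyclicSucc_rowLetters_mem : cyclicSucc (rowLetters x a N) c ∈ rowLetters x a N :=
  mem_coe.1 (cyclicSucc_mem ⟨a, mem_rowLetters_self⟩)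

lemma rowLetters_nextRow (hc : c ∈ rowLetters x a N) :
    rowLetters (nextRow x a N c) c N = rowLetters x a N := by
  induction N generalizing c with
  | zero => simpa [rowLetters, eq_comm] using hc
  | succ N ih =>
    rw [rowLetters_succ] at hc
    rw [rowLetters_succ (x := x)]
    by_cases h : c = x (N + 2)
    · have ih' := ih (c := cyclicSucc (rowLetters x a N) (x (N + 2))) cyclicSucc_rowLetters_mem
      rw [nextRow_succ_of_eq h, rowLetters, image_update_last]
      rw [rowLetters] at ih'
      rw [ih', h]
    · rw [nextRow_succ_of_ne h, rowLetters_update_last, ih (mem_of_mem_insert_of_ne hc h)]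

lemma nextRow_eq_zero {i : ℕ} (hi : i ∉ Icc 2 (N + 1)) : nextRow x a N c i = 0 := by
  induction N generalizing c with
  | zero => rfl
  | succ N ih =>
    rw [mem_Icc] at hi
    have hne : i ≠ N + 2 := by omega
    have hi' : i ∉ Icc 2 (N + 1) := by rw [mem_Icc]; omega
    by_cases h : c = x (N + 2)
    · rw [nextRow_succ_of_eq h, update_of_ne hne, ih hi']
    · rw [nextRow_succ_of_ne h, update_of_ne hne, ih hi']

lemma exists_nextRow_eqOn {K : ℕ} (hK : K ≤ N) (hc : c ∈ rowLetters x a N) :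
    ∃ c' ∈ rowLetters x a K, Set.EqOn (nextRow x a N c) (nextRow x a K c') (Set.Icc 2 (K + 1)) := by
  induction N, hK using Nat.le_induction generalizing c with
  | base => exact ⟨c, hc, fun _ _ => rfl⟩
  | succ N hKN ih =>
    have hrestrict {c₁ v : ℕ} (hc₁ : c₁ ∈ rowLetters x a N) :
        ∃ c' ∈ rowLetters x a K,
          Set.EqOn (update (nextRow x a N c₁) (N + 2) v) (nextRow x a K c')
            (Set.Icc 2 (K + 1)) := by
      obtain ⟨c', hc', heq⟩ := ih hc₁
      exact ⟨c', hc', fun i hi => (update_of_ne (by grind) _ _).trans (heq hi)⟩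
    by_cases h : c = x (N + 2)
    · exact nextRow_succ_of_eq h ▸ hrestrict cyclicSucc_rowLetters_mem
    · rw [rowLetters_succ] at hc
      exact nextRow_succ_of_ne h ▸ hrestrict (mem_of_mem_insert_of_ne hc h)

lemma nextRow_last : nextRow x a (N + 1) c (N + 2) =
    if c = x (N + 2) then cyclicSucc (rowLetters x a N) (x (N + 2)) else x (N + 2) := by
  split_ifs with h
  · rw [nextRow_succ_of_eq h, update_self]
  · rw [nextRow_succ_of_ne h, update_self]

lemma nextRow_last_mem : nextRow x a (N + 1) c (N + 2) ∈ rowLetters x a (N + 1) := by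
  rw [nextRow_last, rowLetters_succ]
  split_ifs
  exacts [mem_insert_of_mem cyclicSucc_rowLetters_mem, mem_insert_self _ _]

lemma nextRow_last_greedy : nextRow x a (N + 1) c (N + 2) =
    cyclicSucc ((Icc 2 (N + 2)).image (nextRow x a (N + 1) c)) (x (N + 2)) := by
  by_cases h : c = x (N + 2)
  · rw [nextRow_succ_of_eq h, image_update_last, ← rowLetters,
      rowLetters_nextRow cyclicSucc_rowLetters_mem, update_self]
  · rw [nextRow_succ_of_ne h, image_update_last, update_self,
      cyclicSucc_of_mem (mem_coe.2 (mem_insert_self _ _))]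

lemma nextRow_mem (hc : c ∈ rowLetters x a N) {i : ℕ} (hi : i < N) :
    nextRow x a N c (i + 2) ∈ rowLetters x a (i + 1) := by
  obtain ⟨c', -, heq⟩ := exists_nextRow_eqOn (Nat.succ_le_of_lt hi) hc
  exact heq ⟨by omega, le_rfl⟩ ▸ nextRow_last_mem

lemma nextRow_greedy (hc : c ∈ rowLetters x a N) {i : ℕ} (hi : i < N) :
    nextRow x a N c (i + 2) =
      cyclicSucc ((Icc 2 (i + 2)).image (nextRow x a N c)) (x (i + 2)) := by
  obtain ⟨c', -, heq⟩ := exists_nextRow_eqOn (Nat.succ_le_of_lt hi) hc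
  rw [image_congr (coe_Icc 2 (i + 2) ▸ heq), heq ⟨by omega, le_rfl⟩, nextRow_last_greedy]

lemma card_rowLetters_of_eq_Icc (hx : rowLetters x a N = Icc 1 (N + 1)) :
    #(rowLetters x a N) = N + 1 := by rw [hx, Nat.card_Icc, Nat.add_sub_cancel]

lemma injOn_of_card_rowLetters (h : #(rowLetters x a N) = N + 1) :
    a ∉ (Icc 2 (N + 1)).image x ∧ Set.InjOn x (Icc 2 (N + 1)) := by
  have hIcc : #(Icc 2 (N + 1)) = N := by simp
  have hle := card_image_le (s := Icc 2 (N + 1)) (f := x)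
  rw [rowLetters, card_insert_eq_ite] at h
  split_ifs at h with ha
  · omega
  · exact ⟨ha, injOn_of_card_image_eq (by omega)⟩

lemma card_rowLetters_of_succ (h : #(rowLetters x a (N + 1)) = N + 2) :
    x (N + 2) ∉ rowLetters x a N ∧ #(rowLetters x a N) = N + 1 := by
  have hIcc : #(Icc 2 (N + 1)) = N := by simp
  have hle : #(rowLetters x a N) ≤ N + 1 :=
    (card_insert_le _ _).trans (Nat.add_le_add_right (card_image_le.trans hIcc.le) 1)
  rw [rowLetters_succ, card_insert_eq_ite] at h
  split_ifs at h with hx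
  · omega
  · exact ⟨hx, by omega⟩

lemma exists_eqOn_nextRow (hx : #(rowLetters x a N) = N + 1)
    (hmem : ∀ i < N, z (i + 2) ∈ rowLetters x a (i + 1)) (hinj : Set.InjOn z (Icc 2 (N + 1)))
    (hgreedy : ∀ i < N, z (i + 2) = cyclicSucc ((Icc 2 (i + 2)).image z) (x (i + 2))) :
    ∃ c ∈ rowLetters x a N, Set.EqOn z (nextRow x a N c) (Icc 2 (N + 1)) := by
  induction N with
  | zero => exact ⟨a, mem_rowLetters_self, fun i hi => by simp at hi⟩
  | succ N ih =>
    obtain ⟨hxN, hcard⟩ := card_rowLetters_of_succ hx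
    have hsub : Icc 2 (N + 1) ⊆ Icc 2 (N + 2) := Icc_subset_Icc_right (by omega)
    obtain ⟨c, hc, heq⟩ := ih hcard (fun i hi => hmem i (by omega))
      (hinj.mono (coe_subset.2 hsub)) fun i hi => hgreedy i (by omega)
    have himage : insert c ((Icc 2 (N + 1)).image z) = rowLetters x a N := by
      rw [← rowLetters_nextRow hc, image_congr heq, rowLetters]
    have heqOn {c' v : ℕ} (h : nextRow x a (N + 1) c' = update (nextRow x a N c) (N + 2) v)
        (hv : z (N + 2) = v) : Set.EqOn z (nextRow x a (N + 1) c') (Icc 2 (N + 2)) := by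
      rw [Icc_two_add_two, coe_insert, h]
      rintro i (rfl | hi)
      · rw [update_self, hv]
      · rw [update_of_ne (by grind), heq hi]
    have hnew : z (N + 2) ∉ (Icc 2 (N + 1)).image z := by
      rw [mem_image]
      rintro ⟨i, hi, h⟩
      have := hinj (mem_coe.2 (hsub hi)) (mem_coe.2 (by simp)) h
      grind
    have hlast := hmem N N.lt_succ_self
    rw [rowLetters_succ, ← himage, mem_insert, mem_insert, or_iff_left hnew] at hlast
    rcases hlast with hlast | hlast
    · exact ⟨c, rowLetters_succ ▸ mem_insert_of_mem hc,
        heqOn (nextRow_succ_of_ne fun h => hxN (h ▸ hc)) hlast⟩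
    · have hs : c = cyclicSucc (rowLetters x a N) (x (N + 2)) := by
        rw [← hlast, hgreedy N N.lt_succ_self, Icc_two_add_two, image_insert, hlast, himage]
      exact ⟨x (N + 2), rowLetters_succ ▸ mem_insert_self _ _,
        heqOn ((nextRow_succ_of_eq rfl).trans (by rw [← hs])) hlast⟩

lemma card_rowLetters_nextRow (hx : #(rowLetters x a N) = N + 1) (hc : c ∈ rowLetters x a N) :
    #(rowLetters (nextRow x a N c) c N) = N + 1 := by rw [rowLetters_nextRow hc, hx]

lemma forall_mem_Icc_two {P : ℕ → Prop} :
    (∀ i ∈ Icc 2 (N + 1), P i) ↔ ∀ i < N, P (i + 2) := by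
  refine ⟨fun h i hi => h _ (mem_Icc.2 (by omega)), fun h i hi => ?_⟩
  obtain ⟨i, rfl⟩ := Nat.exists_eq_add_of_le' (mem_Icc.1 hi).1
  exact h i (by have := (mem_Icc.1 hi).2; omega)

lemma ne_of_mem_rowLetters_of_lt (hx : #(rowLetters x a N) = N + 1) {i i' y : ℕ}
    (hy : y ∈ rowLetters x a i) (hi' : i' ∈ Icc 2 (N + 1)) (h : i + 1 < i') : y ≠ x i' := by
  rintro rfl
  obtain ⟨ha, hinj⟩ := injOn_of_card_rowLetters hx
  rcases mem_insert.1 hy with hy | hy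
  · exact ha (hy ▸ mem_image_of_mem x hi')
  · obtain ⟨k, hk, heq⟩ := mem_image.1 hy
    have := hinj (mem_coe.2 (Icc_subset_Icc_right (by grind) hk)) (mem_coe.2 hi') heq
    grind

lemma mem_rowLetters_of_forall_ne {i y : ℕ} (hy : y ∈ rowLetters x a N)
    (hne : ∀ i' ∈ Icc 2 (N + 1), i + 1 < i' → y ≠ x i') : y ∈ rowLetters x a i := by
  rcases mem_insert.1 hy with rfl | hy
  · exact mem_rowLetters_self
  · obtain ⟨k, hk, rfl⟩ := mem_image.1 hy
    have := hne k hk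
    exact mem_insert_of_mem (mem_image_of_mem x (by grind))

lemma isNextRow_iff_exists_nextRow (hx : rowLetters x a N = Icc 1 (N + 1)) :
    IsNextRow (N + 1) (Icc 2 (N + 1)) (Icc 2 (N + 1)) x z ↔
      ∃ c ∈ Icc 1 (N + 1), nextRow x a N c = z := by
  have hcard := card_rowLetters_of_eq_Icc hx
  have hprefix (z : ℕ → ℕ) {i : ℕ} (hi : i < N) :
      z '' {i' | i' ∈ Icc 2 (N + 1) ∧ i' ≤ i + 2} = (Icc 2 (i + 2)).image z := by
    rw [coe_image]
    congr 1
    ext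
    simp only [Set.mem_ofPred_eq, mem_coe, mem_Icc]
    omega
  rw [← hx]
  constructor
  · rintro ⟨hzero, hmem, hinj, hne, hgreedy⟩
    rw [← hx] at hmem
    simp only [forall_mem_Icc_two] at hmem hgreedy
    obtain ⟨c, hc, heq⟩ := exists_eqOn_nextRow hcard
      (fun i hi => mem_rowLetters_of_forall_ne (hmem i hi)
        (hne (i + 2) (mem_Icc.2 (by omega)))) hinj
      fun i hi => hprefix z hi ▸ hgreedy i hi
    refine ⟨c, hc, _root_.funext fun i => ?_⟩
    by_cases hi : i ∈ Icc 2 (N + 1)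
    exacts [(heq hi).symm, (nextRow_eq_zero hi).trans (hzero i hi).symm]
  · rintro ⟨c, hc, rfl⟩
    have hmem {i : ℕ} (hi : i ∈ Icc 2 (N + 1)) : nextRow x a N c i ∈ rowLetters x a N :=
      rowLetters_nextRow hc ▸ mem_insert_of_mem (mem_image_of_mem _ hi)
    refine ⟨fun _ => nextRow_eq_zero, fun i hi => hx ▸ hmem hi,
      (injOn_of_card_rowLetters (card_rowLetters_nextRow hcard hc)).2,
      forall_mem_Icc_two.2 fun i hi i' => ne_of_mem_rowLetters_of_lt hcard (nextRow_mem hc hi),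
      forall_mem_Icc_two.2 fun i hi => hprefix _ hi ▸ nextRow_greedy hc hi⟩

lemma nextRow_injOn (hx : #(rowLetters x a N) = N + 1) :
    Set.InjOn (nextRow x a N) (rowLetters x a N) := by
  intro c hc c' hc' h
  have hnotMem := (injOn_of_card_rowLetters (card_rowLetters_nextRow hx hc)).1
  have hmem : c ∈ rowLetters (nextRow x a N c') c' N := (rowLetters_nextRow hc').symm ▸ hc
  exact (mem_insert.1 hmem).resolve_right (h ▸ hnotMem)

lemma sum_descents_nextRow (hc : c ∈ rowLetters x a N) :
    (∑ i ∈ Icc 2 (N + 1), if nextRow x a N c i < x i then 1 else 0) = if a < c then 1 else 0 := by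
  induction N generalizing c with
  | zero =>
    obtain rfl : c = a := by simpa [rowLetters] using hc
    simp
  | succ N ih =>
    have hsum (c' v : ℕ) : (∑ i ∈ Icc 2 (N + 2),
        if update (nextRow x a N c') (N + 2) v i < x i then 1 else 0) =
        (if v < x (N + 2) then 1 else 0) +
          ∑ i ∈ Icc 2 (N + 1), if nextRow x a N c' i < x i then 1 else 0 := by
      rw [Icc_two_add_two, sum_insert (by simp), update_self]
      refine congrArg _ (sum_congr rfl fun i hi => ?_)
      rw [update_of_ne (by grind)]
    by_cases h : c = x (N + 2)
    · rw [nextRow_succ_of_eq h, hsum, ih cyclicSucc_rowLetters_mem, add_comm, h,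
        ite_lt_cyclicSucc_add (mem_coe.2 mem_rowLetters_self)]
    · rw [rowLetters_succ] at hc
      rw [nextRow_succ_of_ne h, hsum, ih (mem_of_mem_insert_of_ne hc h), if_neg (lt_irrefl _),
        zero_add]

lemma nextRow_last_eq_nextLast (hx : rowLetters x a (N + 1) = Icc 1 (N + 2)) :
    nextRow x a (N + 1) c (N + 2) = nextLast (N + 2) (x (N + 2)) c := by
  rw [nextRow_last, nextLast]
  congr 1
  have hxN := (card_rowLetters_of_succ (card_rowLetters_of_eq_Icc hx)).1
  have hlast : x (N + 2) ∈ Icc 1 (N + 2) := hx ▸ rowLetters_succ ▸ mem_insert_self _ _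
  have hmem (y : ℕ) : y ∈ (rowLetters x a N : Set ℕ) ↔ (1 ≤ y ∧ y ≤ N + 2) ∧ y ≠ x (N + 2) := by
    rw [mem_coe, ← mem_Icc, ← hx, rowLetters_succ, mem_insert]
    grind
  generalize x (N + 2) = b at *
  have h := isLeast_cyclicSucc (S := rowLetters x a N) ⟨a, mem_rowLetters_self⟩ b
  rw [mem_Icc] at hlast
  simp only [IsLeast, mem_lowerBounds, Set.mem_ofPred_eq, hmem] at h
  split_ifs with hb
  · rcases h with ⟨h, -⟩ | ⟨-, h, hmin⟩
    · omega
    · exact le_antisymm (hmin 1 (by omega)) h.1.1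
  · rcases h with ⟨h, hmin⟩ | ⟨hlt, -⟩
    · have := hmin (b + 1) (by omega)
      omega
    · have := hlt (b + 1) (by omega)
      omega

end NextRow

section MainFormula

/-- The composition `(0, m, …, m, M + m)` of length `n`, of which `λ⁺` is an instance. -/
def stepShape (n m M : ℕ) : ℕ → ℕ := fun i => if i = n then M + m else if 2 ≤ i then m else 0

variable {m M N a c : ℕ} {x : ℕ → ℕ} {K D : ℕ → ℤ}

lemma stepShape_last : stepShape N m M N = M + m := if_pos rfl

lemma stepShape_of_lt {i : ℕ} (hi : i ∈ Icc 2 N) : stepShape (N + 1) m M i = m := by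
  rw [mem_Icc] at hi
  rw [stepShape, if_neg (by omega), if_pos hi.1]

lemma stepShape_tsub_one (i : ℕ) :
    stepShape (N + 2) (m + 1) M i - 1 = stepShape (N + 2) m M i := by
  simp only [stepShape]
  split_ifs <;> omega

lemma cols_stepShape : cols (N + 2) (stepShape (N + 2) (m + 1) M) 0 = Icc 2 (N + 2) := by
  ext i
  simp only [mem_cols, stepShape, mem_Icc]
  split_ifs <;> omega

lemma sum_ite_stepShape (P : ℕ → Prop) [DecidablePred P] :
    (∑ i ∈ Icc 2 (N + 2), if P i then stepShape (N + 2) m M i else 0) =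
      (if P (N + 2) then M else 0) + m * ∑ i ∈ Icc 2 (N + 2), if P i then 1 else 0 := by
  have hsum : (∑ i ∈ Icc 2 (N + 1), if P i then stepShape (N + 2) m M i else 0) =
      m * ∑ i ∈ Icc 2 (N + 1), if P i then 1 else 0 := by
    rw [mul_sum]
    refine sum_congr rfl fun i hi => ?_
    rw [stepShape_of_lt hi, mul_ite, mul_one, mul_zero]
  rw [Icc_two_add_two, sum_insert (by simp), sum_insert (by simp), hsum, stepShape_last]
  split_ifs <;> ring

lemma mem_Icc_of_rowLetters_eq_Icc (hx : rowLetters x a N = Icc 1 (N + 1)) {i : ℕ}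
    (hi : i ∈ Icc 2 (N + 1)) : x i ∈ Icc 1 (N + 1) :=
  hx ▸ mem_insert_of_mem (mem_image_of_mem x hi)

lemma card_filter_eq_of_rowLetters (hx : rowLetters x a N = Icc 1 (N + 1)) {t : ℕ}
    (ht : t ∈ Icc 1 (N + 1)) : #{i ∈ Icc 2 (N + 1) | x i = t} = if t = a then 0 else 1 := by
  obtain ⟨ha, hinj⟩ := injOn_of_card_rowLetters (card_rowLetters_of_eq_Icc hx)
  split_ifs with h
  · rw [card_eq_zero, filter_eq_empty_iff]
    exact fun i hi hxi => ha (h ▸ hxi ▸ mem_image_of_mem x hi)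
  · obtain ⟨i, hi, rfl⟩ := mem_image.1 ((mem_insert.1 (hx ▸ ht)).resolve_left h)
    rw [card_eq_one]
    refine ⟨i, Finset.ext fun i' => ?_⟩
    rw [mem_filter, mem_singleton]
    exact ⟨fun h => hinj (mem_coe.2 h.1) (mem_coe.2 hi) h.2, by rintro rfl; exact ⟨hi, rfl⟩⟩

lemma columnSum_congr {n b : ℕ} {D' : ℕ → ℤ} (h : ∀ t ∈ Icc 1 n, D t = D' t) :
    columnSum n M b D = columnSum n M b D' := by
  have hcontents : contentsEq n M D = contentsEq n M D' :=
    filter_congr fun p _ => forall₂_congr fun t ht => by rw [h t ht]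
  rw [columnSum, hcontents, columnSum]

lemma nextLast_lt_iff {n b : ℕ} (hn : 1 < n) : nextLast n b c < b ↔ c = b ∧ b = n := by
  rw [nextLast]
  split_ifs <;> omega

lemma asc_nextRow (hx : rowLetters x a (N + 1) = Icc 1 (N + 2)) (hc : c ∈ Icc 1 (N + 2)) :
    (∑ i ∈ Icc 2 (N + 2),
      if nextRow x a (N + 1) c i < x i then stepShape (N + 2) m M i else 0) =
      (if a < c then m else 0) + if c = x (N + 2) ∧ x (N + 2) = N + 2 then M else 0 := by
  rw [sum_ite_stepShape, sum_descents_nextRow (hx ▸ hc), nextRow_last_eq_nextLast hx, mul_ite,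
    mul_one, mul_zero, add_comm]
  simp only [nextLast_lt_iff (show 1 < N + 2 by omega)]

theorem greedySum_stepShape (hx : rowLetters x a (N + 1) = Icc 1 (N + 2))
    (hK : ∀ t ∈ Icc 1 (N + 2), K t = D t + if t = a then (m : ℤ) else m + 1) :
    greedySum (N + 2) (stepShape (N + 2) (m + 1) M) x K =
      closedSum (N + 2) m M a (x (N + 2)) D := by
  classical
  induction m generalizing x a K D with
  | zero =>
    rw [greedySum_eq_columnSum (mem_Icc.2 ⟨by omega, le_rfl⟩) stepShape_last, closedSum_zero]
    · refine columnSum_congr fun t ht => ?_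
      rw [cols_stepShape, card_filter_eq_of_rowLetters hx ht, hK t ht]
      split_ifs <;> simp
    · intro i _ hne
      simp only [stepShape, if_neg hne]
      split_ifs <;> omega
    · exact cols_stepShape ▸ fun i => mem_Icc_of_rowLetters_eq_Icc hx
  | succ m ih =>
    have hcols : cols (N + 2) (stepShape (N + 2) (m + 2) M) 1 = Icc 2 (N + 2) := by
      simp only [← cols_tsub_one, stepShape_tsub_one, cols_stepShape]
    rw [greedySum_eq_sum_nextRow (Z := (Icc 1 (N + 2)).image (nextRow x a (N + 1)))
        (fun z => by rw [cols_stepShape, hcols, isNextRow_iff_exists_nextRow hx, mem_image])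
        (cols_stepShape ▸ fun i => mem_Icc_of_rowLetters_eq_Icc hx),
      sum_image (hx ▸ nextRow_injOn (card_rowLetters_of_eq_Icc hx)),
      closedSum_succ (mem_Icc_of_rowLetters_eq_Icc hx (by simp))]
    refine sum_congr rfl fun c hc => ?_
    simp only [hcols, stepShape_tsub_one]
    rw [asc_nextRow hx hc, ← nextRow_last_eq_nextLast hx, ih (D := D + Pi.single c 1)]
    · rw [rowLetters_nextRow (hx ▸ hc), hx]
    · intro t ht
      rw [cols_stepShape, card_filter_eq_of_rowLetters hx ht, hK t ht, Pi.add_apply,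
        Pi.single_apply]
      push_cast
      split_ifs <;> ring

end MainFormula

section BottomTuple

variable {n a b : ℕ}

lemma image_getD_sort (S : Finset ℕ) :
    (range #S).image (fun i => (S.sort (· ≤ ·)).getD i 0) = S := by
  ext y
  rw [← mem_sort (· ≤ ·) (s := S), List.mem_iff_getElem, mem_image]
  simp only [mem_range, length_sort]
  exact exists_congr fun i => ⟨fun ⟨hi, h⟩ => ⟨hi, by rwa [List.getD_eq_getElem] at h⟩,
    fun ⟨hi, h⟩ => ⟨hi, by rwa [List.getD_eq_getElem]⟩⟩

lemma aTuple_last : aTuple n a b n = b := if_pos rfl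

lemma rowLetters_aTuple {N : ℕ} (ha : a ∈ Icc 1 (N + 2)) (hb : b ∈ Icc 1 (N + 2)) (hab : a ≠ b) :
    rowLetters (aTuple (N + 2) a b) a (N + 1) = Icc 1 (N + 2) := by
  set S := ((Icc 1 (N + 2)).erase a).erase b
  have hS : #S = N := by
    rw [card_erase_of_mem (mem_erase.2 ⟨hab.symm, hb⟩), card_erase_of_mem ha, Nat.card_Icc]
    omega
  have hreflect : (Icc 2 (N + 1)).image (fun i => N + 1 - i) = range N := by
    ext i
    simp only [mem_image, mem_Icc, mem_range]
    exact ⟨by omega, fun hi => ⟨N + 1 - i, by omega⟩⟩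
  have himage : (Icc 2 (N + 1)).image (aTuple (N + 2) a b) = S := by
    rw [← image_getD_sort S, hS, ← hreflect, image_image]
    refine image_congr fun i hi => if_neg ?_
    have := (mem_Icc.1 hi).2
    omega
  rw [rowLetters, Icc_two_add_two, image_insert, aTuple_last, himage,
    insert_erase (mem_erase.2 ⟨hab.symm, hb⟩), insert_erase ha]

end BottomTuple

section FinTuples

variable {n m M : ℕ}

lemma liftFin_of_mem {t : ℕ} (ht : t ∈ Icc 1 n) (l : ℕ → ℕ) :
    liftFin n (fun i => l (i + 1)) t = l t := by
  rw [mem_Icc] at ht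
  rw [liftFin, dif_pos (by omega), Nat.sub_add_cancel ht.1]

lemma sum_fin_add_one {A : Type*} [AddCommMonoid A] (f : ℕ → A) :
    ∑ i : Fin n, f (i + 1) = ∑ t ∈ Icc 1 n, f t := by
  rw [Fin.sum_univ_eq_sum_range fun i => f (i + 1), range_eq_Ico, sum_Ico_add', zero_add,
    Ico_add_one_right_eq_Icc]

lemma forall_fin_add_one {P : ℕ → Prop} : (∀ i : Fin n, P (i + 1)) ↔ ∀ t ∈ Icc 1 n, P t := by
  refine ⟨fun h t ht => ?_, fun h i => h _ (mem_Icc.2 (by omega))⟩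
  rw [mem_Icc] at ht
  simpa only [Nat.sub_add_cancel ht.1] using h ⟨t - 1, by omega⟩

/-- The pairs `(l, p)` indexing the sum in the closed formula. -/
def finContentPairs (n m M : ℕ) (k : ℕ → ℕ) : Finset ((Fin n → ℕ) × (Fin n → ℕ)) :=
  {lp ∈ (Fintype.piFinset fun _ : Fin n => range (m + 1)) ×ˢ
      (Fintype.piFinset fun _ : Fin n => range (M + 1)) |
    ∑ i, lp.1 i = m ∧ ∑ i, lp.2 i = M ∧
      ∀ i : Fin n, lp.2 i + ∑ α ∈ univ.erase i, lp.1 α = k (i + 1)}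

lemma mem_finContentPairs {k l p : ℕ → ℕ} :
    ((fun i : Fin n => l (i + 1), fun i : Fin n => p (i + 1)) ∈ finContentPairs n m M k) ↔
      ∑ t ∈ Icc 1 n, l t = m ∧ ∑ t ∈ Icc 1 n, p t = M ∧
        ∀ t ∈ (Icc 1 n : Finset ℕ), (p t : ℤ) - l t = k t - m := by
  have hrange {q : ℕ → ℕ} {s : ℕ} (hs : ∑ i : Fin n, q (i + 1) = s) :
      (fun i : Fin n => q (i + 1)) ∈ Fintype.piFinset fun _ : Fin n => range (s + 1) :=
    Fintype.mem_piFinset.2 fun i => mem_range_succ_iff.2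
      (hs ▸ single_le_sum (f := fun i : Fin n => q (i + 1)) (by simp) (mem_univ i))
  rw [finContentPairs, mem_filter, mem_product,
    and_iff_right_of_imp fun h => ⟨hrange h.1, hrange h.2.1⟩, ← sum_fin_add_one l,
    ← sum_fin_add_one p, ← forall_fin_add_one]
  refine and_congr_right fun hl => and_congr_right fun _ => forall_congr' fun i => ?_
  have := add_sum_erase univ (fun i : Fin n => l (i + 1)) (mem_univ i)
  dsimp only at hl this ⊢
  omega

lemma sum_finContentPairs {A : Type*} [AddCommMonoid A] (k : ℕ → ℕ)
    {f : (Fin n → ℕ) × (Fin n → ℕ) → A} {g : (ℕ → ℕ) × (ℕ → ℕ) → A}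
    (h : ∀ l p : ℕ → ℕ, f (fun i => l (i + 1), fun i => p (i + 1)) = g (l, p)) :
    ∑ lp ∈ finContentPairs n m M k, f lp = ∑ lp ∈ contentPairs n m M fun t => k t - m, g lp := by
  let restrict (l : ℕ → ℕ) : Fin n → ℕ := fun i => l (i + 1)
  let extend (l : Fin n → ℕ) : ℕ → ℕ := fun t => if t ∈ Icc 1 n then liftFin n l t else 0
  have hrestrict (l : Fin n → ℕ) : restrict (extend l) = l := by
    refine _root_.funext fun i => ?_
    simp [restrict, extend, liftFin, Nat.succ_le_iff]
  have hextend {l : ℕ → ℕ} (hl : ∀ t, l t ≠ 0 → t ∈ Icc 1 n) : extend (restrict l) = l := by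
    refine _root_.funext fun t => ?_
    by_cases ht : t ∈ Icc 1 n
    · rw [← liftFin_of_mem ht l]
      exact if_pos ht
    · rw [not_imp_comm.1 (hl t) ht]
      exact if_neg ht
  symm
  refine sum_nbij' (fun lp => (restrict lp.1, restrict lp.2)) (fun lp => (extend lp.1, extend lp.2))
    ?_ ?_ ?_ ?_ fun lp _ => (h lp.1 lp.2).symm
  · intro lp hlp
    obtain ⟨hl, hp, hD⟩ := mem_contentPairs.1 hlp
    exact mem_finContentPairs.2 ⟨(mem_piAntidiag.1 hl).1, (mem_piAntidiag.1 hp).1, hD⟩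
  · rintro ⟨l, p⟩ hlp
    rw [← hrestrict l, ← hrestrict p] at hlp
    obtain ⟨hl, hp, hD⟩ := mem_finContentPairs.1 hlp
    have hmem (q : Fin n → ℕ) (t : ℕ) (ht : extend q t ≠ 0) : t ∈ Icc 1 n :=
      not_imp_comm.1 (fun ht' => if_neg ht') ht
    exact mem_contentPairs.2
      ⟨mem_piAntidiag.2 ⟨hl, hmem l⟩, mem_piAntidiag.2 ⟨hp, hmem p⟩, hD⟩
  · rintro ⟨l, p⟩ hlp
    obtain ⟨hl, hp, -⟩ := mem_contentPairs.1 hlp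
    exact Prod.ext (hextend (mem_piAntidiag.1 hl).2) (hextend (mem_piAntidiag.1 hp).2)
  · rintro ⟨l, p⟩ -
    exact Prod.ext (hrestrict l) (hrestrict p)

end FinTuples

section ClosedFormula

variable {n m M j b : ℕ}

lemma antidominant_stepShape : Antidominant n (stepShape n m M) := by
  intro i i' _ hii' hi'
  simp only [stepShape]
  split_ifs <;> omega

lemma cBar_stepShape (hj : j ∈ Icc 1 n) (hb : b ∈ Icc 1 n) (hjb : j ≠ b) (k : ℕ → ℕ) :
    cBar n (stepShape n (m + 1) M) j b (fun i => if i = j then k i else k i + 1) =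
      closedSum n m M j b fun t => k t - m := by
  obtain ⟨N, rfl⟩ : ∃ N, n = N + 2 :=
    Nat.exists_eq_add_of_le' (by simp only [mem_Icc] at hj hb; omega)
  have hrow := rowLetters_aTuple hj hb hjb
  rw [cBar, cCoef_eq_greedySum antidominant_stepShape, greedySum_stepShape hrow, aTuple_last]
  · intro t _
    split_ifs <;> push_cast <;> ring
  · exact cols_stepShape ▸ fun i => mem_Icc_of_rowLetters_eq_Icc hrow
  · exact cols_stepShape ▸ (injOn_of_card_rowLetters (card_rowLetters_of_eq_Icc hrow)).2

theorem cbar_closed_formula_general {m₁ m₂ : ℕ} (hj : j ∈ Icc 1 n) (hb : b ∈ Icc 1 n)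
    (hjb : j ≠ b) (k : ℕ → ℕ) :
    cBar n (stepShape n (m₂ + 1) m₁) j b (fun i => if i = j then k i else k i + 1) =
      ∑ lp ∈ finContentPairs n m₂ m₁ k,
        X ^ (liftFin n lp.1 b * liftFin n lp.2 b + ∑ α ∈ Icc (j + 1) n, liftFin n lp.1 α +
            ∑ α ∈ Ico 1 b, liftFin n lp.2 α) *
          qMultinomial n m₂ (liftFin n lp.1) * qMultinomial n m₁ (liftFin n lp.2) := by
  refine (cBar_stepShape hj hb hjb k).trans (sum_finContentPairs k fun l p => ?_).symm
  have hl : ∑ α ∈ Icc (j + 1) n, liftFin n (fun i => l (i + 1)) α = sumAbove n l j := by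
    have hIcc : {t ∈ Icc 1 n | j < t} = Icc (j + 1) n := by grind
    rw [sumAbove, hIcc]
    exact sum_congr rfl fun t ht => liftFin_of_mem (by grind) l
  have hp : ∑ α ∈ Ico 1 b, liftFin n (fun i => p (i + 1)) α = sumBelow n p b := by
    have hIco : {t ∈ Icc 1 n | t < b} = Ico 1 b := by grind
    rw [sumBelow, hIco]
    exact sum_congr rfl fun t ht => liftFin_of_mem (by grind) p
  dsimp only
  rw [hl, hp, liftFin_of_mem hb, liftFin_of_mem hb, add_assoc, mul_assoc,
    qMultinomial_congr fun t ht => liftFin_of_mem ht l,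
    qMultinomial_congr fun t ht => liftFin_of_mem ht p]

end ClosedFormula

end CO

open CO in
/-- Closed formula for `c^{λ⁺}_{j|1}` with
`λ⁺ = (0, m₂+1, …, m₂+1, m₁+m₂+1)`:
`c^{λ⁺}_{j|1}(k₁+1,…,k_{j-1}+1,k_j,k_{j+1}+1,…,k_n+1)
  = Σ_{l,p} q^{l₁p₁ + l_{j+1} + ⋯ + l_n} binom_q(m₂; l) binom_q(m₁; p)`,
the sum being over `l, p ∈ ℤ_{≥0}^n` with `Σl = m₂`, `Σp = m₁`, and
`p_i + Σ_{α≠i} l_α = k_i` for all `i`. -/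
theorem cbar_closed_formula (n : ℕ) (hn : 3 ≤ n) (m₁ m₂ : ℕ)
    (lamP : ℕ → ℕ)
    (hlamP : lamP = fun i => if i = n then m₁ + m₂ + 1 else if 2 ≤ i then m₂ + 1 else 0)
    (j : ℕ) (hj1 : 2 ≤ j) (hj2 : j ≤ n) (k : ℕ → ℕ) :
    cBar n lamP j 1 (fun i => if i = j then k i else k i + 1)
      = ∑ lp ∈ ((Fintype.piFinset fun _ : Fin n => Finset.range (m₂ + 1)) ×ˢ
            (Fintype.piFinset fun _ : Fin n => Finset.range (m₁ + 1))).filter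
          fun lp => (∑ i, lp.1 i) = m₂ ∧ (∑ i, lp.2 i) = m₁ ∧
            ∀ i : Fin n, lp.2 i + (∑ α ∈ Finset.univ.erase i, lp.1 α) = k ((i : ℕ) + 1),
        Polynomial.X ^ (lp.1 ⟨0, by omega⟩ * lp.2 ⟨0, by omega⟩ +
            ∑ α ∈ Finset.Icc (j + 1) n, liftFin n lp.1 α) *
          qMultinomial n m₂ (liftFin n lp.1) * qMultinomial n m₁ (liftFin n lp.2) := by
  have hfirst (l : Fin n → ℕ) : liftFin n l 1 = l ⟨0, by omega⟩ := dif_pos _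
  subst hlamP
  refine (cbar_closed_formula_general (mem_Icc.2 ⟨by omega, hj2⟩) (mem_Icc.2 ⟨le_rfl, by omega⟩)
    (by omega) k).trans ?_
  simp only [finContentPairs, hfirst, Ico_self, sum_empty, add_zero]
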